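/- Let n ≥ 1 and N = (N_0, …, N_n) ∈ ℤ^{n+1} with N_0 + ⋯ + N_n = 0, and let f be any point of the flow polytope F_n(N). Then K_n(N) ≥ (max_{0 ≤ k ≤ n−1} e^{h(s_k)}) · e^{−2 ∑_{k=0}^{n−1} h(s_k)} · e^{H(f)}. -/

import Mathlib

open Finset

/-- The entropy-like function `h(t) = (t+1)·log(t+1) − t·log t` (with `h 0 = 0`
since `Real.log 0 = 0`). -/
noncomputable def entH (t : ℝ) : ℝ := (t + 1) * Real.log (t + 1) - t * Real.log t

/-- `f` is an integer flow on the complete graph `k_{n+1}` with netflow `N`: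
`f i j` is the flow on the edge `(i,j)` for `i < j`, it vanishes for `i ≥ j`,
and the netflow at each vertex `i` is `N i`. -/
def IsIntFlow (n : ℕ) (N : Fin (n + 1) → ℤ) (f : Fin (n + 1) → Fin (n + 1) → ℕ) : Prop :=
  (∀ i j : Fin (n + 1), ¬ i < j → f i j = 0) ∧
  ∀ i : Fin (n + 1),
    (∑ j : Fin (n + 1), if i < j then (f i j : ℤ) else 0) -
      (∑ k : Fin (n + 1), if k < i then (f k i : ℤ) else 0) = N i

/-- The Kostant partition function: the number of integer flows on the complete
graph `k_{n+1}` with netflow `N`. -/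
noncomputable def Kn (n : ℕ) (N : Fin (n + 1) → ℤ) : ℕ :=
  Nat.card {f : Fin (n + 1) → Fin (n + 1) → ℕ // IsIntFlow n N f}

/-- The flow polytope of the complete graph `k_{n+1}` with netflow `N`. -/
def FlowPolytope (n : ℕ) (N : Fin (n + 1) → ℝ) : Set (Fin (n + 1) → Fin (n + 1) → ℝ) :=
  {f | (∀ i j : Fin (n + 1), i < j → 0 ≤ f i j) ∧
    (∀ i j : Fin (n + 1), ¬ i < j → f i j = 0) ∧
    ∀ i : Fin (n + 1),
      (∑ j : Fin (n + 1), if i < j then f i j else 0) -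
        (∑ k : Fin (n + 1), if k < i then f k i else 0) = N i}

/-- The flow entropy `H(f)`. -/
noncomputable def flowEntropy (n : ℕ) (N : Fin (n + 1) → ℝ)
    (f : Fin (n + 1) → Fin (n + 1) → ℝ) : ℝ :=
  (∑ i : Fin (n + 1), ∑ j : Fin (n + 1), if i < j then entH (f i j) else 0) +
  ∑ j : Fin (n + 1), if 0 < (j : ℕ) ∧ (j : ℕ) < n then
    entH (∑ i : Fin (n + 1), if i < j then (N i - f i j) else 0) else 0

/-- Partial sums `s_k = N_0 + ⋯ + N_k`. -/
def sPartial (n : ℕ) (N : Fin (n + 1) → ℤ) (k : ℕ) : ℤ :=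
  ∑ j : Fin (n + 1), if (j : ℕ) ≤ k then N j else 0

/-- Extend `(N_0,…,N_{n−1})` to the netflow vector `(N_0,…,N_{n−1},−∑ N_i)`. -/
def extend (n : ℕ) (N : Fin n → ℤ) : Fin (n + 1) → ℤ := Fin.snoc N (-∑ i, N i)

open Finset

/-- A bilinear form which is nonpositive on some hyperplane. -/
def Lor {E : Type*} [AddCommGroup E] [Module ℝ E] (B : LinearMap.BilinForm ℝ E) : Prop :=
  ∃ l : E →ₗ[ℝ] ℝ, ∀ z, l z = 0 → B z z ≤ 0

lemma Lor.rcs {E : Type*} [AddCommGroup E] [Module ℝ E] {B : LinearMap.BilinForm ℝ E}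
    (h : Lor B) (hs : ∀ x y, B x y = B y x) (x y : E) (hy : 0 < B y y) :
    B x x * B y y ≤ (B x y) ^ 2 := by
  obtain ⟨l, hl⟩ := h
  have hly : l y ≠ 0 := fun h0 => absurd (hl y h0) (not_le.mpr hy)
  have h1 := hl (l y • x - l x • y) (by simp; ring)
  have e : B (l y • x - l x • y) (l y • x - l x • y)
      = (l y)^2 * B x x - 2 * l x * l y * B x y + (l x)^2 * B y y := by
    simp only [map_sub, map_smul, LinearMap.sub_apply, LinearMap.smul_apply, smul_eq_mul, hs y x]
    ring
  rw [e] at h1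
  have h2 : 0 < (l y)^2 := by positivity
  have h3 : (l y)^2 * (B x x * B y y - (B x y)^2) ≤ 0 := by
    nlinarith [mul_nonpos_of_nonpos_of_nonneg h1 hy.le, sq_nonneg (l x * B y y - l y * B x y)]
  by_contra hc
  push Not at hc
  nlinarith [mul_pos h2 (sub_pos.mpr hc)]

lemma Lor.key {E : Type*} [AddCommGroup E] [Module ℝ E] {A Q' Q : LinearMap.BilinForm ℝ E}
    (hA : Lor A) (hQ' : Lor Q') (sA : ∀ x y, A x y = A y x) (sQ' : ∀ x y, Q' x y = Q' y x)
    (lam : ℝ) (hlam : 0 ≤ lam) (hQ : ∀ x y, Q x y = A x y + lam * Q' x y) (u v : E)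
    (huv : ∀ x, Q' v x = Q u x) (h1 : 0 < A u u) (h2 : 0 < Q' v v) (h3 : 0 ≤ A u v)
    (h4 : 0 < Q' u v) :
    Lor Q := by
  refine ⟨Q u, fun x hx => ?_⟩
  have hvx : Q' v x = 0 := by rw [huv, hx]
  have hAx : A u x = - (lam * Q' u x) := by have := hQ u x; rw [hx] at this; linarith
  have e1 := hA.rcs sA x u h1
  rw [sA x u, hAx] at e1
  have hxx : Q' x x ≤ 0 := by
    have := hQ'.rcs sQ' x v h2
    rw [sQ' x v, hvx] at this
    nlinarith
  -- Cauchy-Schwarz on the orthogonal complement of `v`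
  have cs : (Q' u x)^2 * Q' v v ≤ - Q' x x * ((Q' u v)^2 - Q' u u * Q' v v) := by
    -- vector z = s x + (Q'vv u - Q'uv v)
    have hz : ∀ s : ℝ, s^2 * Q' x x + 2 * s * (Q' v v * Q' u x)
        + Q' v v * (Q' u u * Q' v v - (Q' u v)^2) ≤ 0 := by
      intro s
      have := hQ'.rcs sQ' (s • x + (Q' v v • u - Q' u v • v)) v h2
      have ev : Q' (s • x + (Q' v v • u - Q' u v • v)) v = 0 := by
        simp only [map_sub, map_add, map_smul, LinearMap.sub_apply, LinearMap.add_apply,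
          LinearMap.smul_apply, smul_eq_mul, sQ' x v, hvx]
        ring
      rw [ev] at this
      have e : Q' (s • x + (Q' v v • u - Q' u v • v)) (s • x + (Q' v v • u - Q' u v • v))
         = s^2 * Q' x x + 2 * s * (Q' v v * Q' u x)
        + Q' v v * (Q' u u * Q' v v - (Q' u v)^2) := by
        simp only [map_sub, map_add, map_smul, LinearMap.sub_apply, LinearMap.add_apply,
          LinearMap.smul_apply, smul_eq_mul, sQ' x v, sQ' v u, sQ' x u, hvx]
        ring
      rw [e] at this
      by_contra hc
      push Not at hc
      nlinarith [mul_pos hc h2]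
    have hd := discrim_le_zero (a := - Q' x x) (b := - 2 * (Q' v v * Q' u x))
      (c := Q' v v * ((Q' u v)^2 - Q' u u * Q' v v)) (fun s => by nlinarith [hz s])
    unfold discrim at hd
    have : Q' v v * ((Q' u x)^2 * Q' v v - - Q' x x * ((Q' u v)^2 - Q' u u * Q' v v)) ≤ 0 := by
      nlinarith
    by_contra hc
    push Not at hc
    nlinarith [mul_pos h2 (sub_pos.mpr hc)]
  have a1 : Q' u v = A u u + lam * Q' u u := by rw [sQ' u v, huv, hQ]
  have a2 : Q' v v = A u v + lam * Q' u v := by rw [huv v, hQ]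
  have d : lam * ((Q' u v)^2 - Q' u u * Q' v v) ≤ A u u * Q' v v := by
    have : lam * ((Q' u v)^2 - Q' u u * Q' v v)
      = A u u * Q' v v - Q' u v * A u v := by
      rw [a2]
      have : lam * Q' u u = Q' u v - A u u := by linarith
      linear_combination (-(A u v + lam * Q' u v)) * this
    nlinarith [mul_nonneg h4.le h3]
  have f : lam * (Q' u x)^2 ≤ - Q' x x * A u u := by
    have : (lam * (Q' u x)^2 - - Q' x x * A u u) * Q' v v ≤ 0 := by
      nlinarith [mul_le_mul_of_nonneg_left cs hlam, mul_le_mul_of_nonneg_left d (neg_nonneg.mpr hxx)]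
    by_contra hc
    push Not at hc
    nlinarith [mul_pos (sub_pos.mpr hc) h2]
  have g : Q x x * A u u ≤ 0 := by
    rw [hQ]; nlinarith [mul_le_mul_of_nonneg_left f hlam]
  by_contra hc
  push Not at hc
  nlinarith [mul_pos hc h1]

section
set_option linter.unusedSectionVars false
variable {W : Type*} [Fintype W] [DecidableEq W]

/-- unit vector -/
def ev (i : W) : W → ℕ := Pi.single i 1

/-- Hankel-type matrix attached to `p`. -/
def HM (p : (W → ℕ) → ℝ) (g : W → ℕ) : Matrix W W ℝ := fun i j => p (g + ev i + ev j)

def LorP (p : (W → ℕ) → ℝ) : Prop := ∀ g, Lor (Matrix.toBilin' (HM p g))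

lemma HM_symm (p : (W → ℕ) → ℝ) (g : W → ℕ) (i j : W) : HM p g i j = HM p g j i := by
  unfold HM; rw [add_right_comm]

lemma toBilin_symm (A : Matrix W W ℝ) (hA : ∀ i j, A i j = A j i) (x y : W → ℝ) :
    Matrix.toBilin' A x y = Matrix.toBilin' A y x := by
  rw [Matrix.toBilin'_apply, Matrix.toBilin'_apply, Finset.sum_comm]
  refine Finset.sum_congr rfl fun i _ => Finset.sum_congr rfl fun j _ => ?_
  rw [hA]; ring

lemma LorP.logconcave {p : (W → ℕ) → ℝ} (h : LorP p) (hp : ∀ g, 0 < p g) (g : W → ℕ) (i j : W) :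
    p (g + ev i + ev i) * p (g + ev j + ev j) ≤ p (g + ev i + ev j) ^ 2 := by
  have := (h g).rcs (toBilin_symm _ (HM_symm p g)) (Pi.single i 1) (Pi.single j 1)
    (by rw [Matrix.toBilin'_single]; exact hp _)
  simpa only [Matrix.toBilin'_single, HM] using this

lemma LorP.step {p q : (W → ℕ) → ℝ} (hp : ∀ g, 0 < p g) (hq : ∀ g, 0 < q g) (u v : W)
    (huv : u ≠ v) (lam : ℝ) (hlam : 0 ≤ lam) (ha : ∀ g, g v = 0 → q g = p g)
    (hb : ∀ g, q (g + ev v) = p (g + ev v) + lam * q (g + ev u)) (hL : LorP p) : LorP q := by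
  have main : ∀ (g : W → ℕ) (Q' : Matrix W W ℝ), (∀ i j, Q' i j = Q' j i) →
      Lor (Matrix.toBilin' Q') → (∀ i j, HM q g i j = HM p g i j + lam * Q' i j) →
      (∀ j, Q' v j = HM q g u j) → Lor (Matrix.toBilin' (HM q g)) := by
    intro g Q' hs hQ' hQ hv
    refine Lor.key (hL g) hQ' (toBilin_symm _ (HM_symm p g)) (toBilin_symm _ hs) lam hlam ?_
      (Pi.single u 1) (Pi.single v 1) ?_ ?_ ?_ ?_ ?_
    · intro x y
      simp only [Matrix.toBilin'_apply, hQ, Finset.mul_sum]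
      rw [← Finset.sum_add_distrib]
      refine Finset.sum_congr rfl fun i _ => ?_
      rw [← Finset.sum_add_distrib]
      refine Finset.sum_congr rfl fun j _ => ?_
      ring
    · intro x
      have hx : ∀ (M : Matrix W W ℝ) (a : W), Matrix.toBilin' M (Pi.single a 1) x
          = ∑ j, M a j * x j := by
        intro M a
        rw [Matrix.toBilin'_apply, Finset.sum_eq_single a]
        · simp
        · intro b _ hb; simp [hb]
        · simp
      rw [hx, hx]
      exact Finset.sum_congr rfl fun j _ => by rw [hv]
    · rw [Matrix.toBilin'_single]; exact hp _
    · rw [Matrix.toBilin'_single, hv]; exact hq _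
    · rw [Matrix.toBilin'_single]; exact (hp _).le
    · rw [Matrix.toBilin'_single, hs, hv]; exact hq _
  have hind : ∀ (n : ℕ) (g : W → ℕ), g v = n → Lor (Matrix.toBilin' (HM q g)) := by
    intro n
    induction n with
    | zero =>
      intro g hg
      refine main g (Matrix.of fun i j => if i = v then q (g + ev u + ev j) else
        if j = v then q (g + ev u + ev i) else 0) ?_ ?_ ?_ ?_
      · intro i j
        by_cases hi : i = v <;> by_cases hj : j = v <;> simp [hi, hj]
      · refine ⟨Matrix.toBilin' (Matrix.of fun i j => if i = v then q (g + ev u + ev j) else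
            if j = v then q (g + ev u + ev i) else 0) (Pi.single v 1), fun z hz => ?_⟩
        have hz' : ∑ j, q (g + ev u + ev j) * z j = 0 := by
          rw [← hz, Matrix.toBilin'_apply]
          symm
          rw [Finset.sum_eq_single v]
          · simp
          · intro b _ hb; simp [hb]
          · simp
        rw [Matrix.toBilin'_apply]
        simp only [Matrix.of_apply]
        have e : ∀ i j, z i * (if i = v then q (g + ev u + ev j) else
            if j = v then q (g + ev u + ev i) else 0) * z j
            = (if i = v then z v * (q (g + ev u + ev j) * z j) else 0)
            + (if j = v then z v * (q (g + ev u + ev i) * z i) else 0)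
            - (if i = v then if j = v then q (g + ev u + ev v) * z v * z v else 0 else 0) := by
          intro i j
          by_cases hi : i = v <;> by_cases hj : j = v <;> simp [hi, hj] <;> ring
        simp only [e, Finset.sum_sub_distrib, Finset.sum_add_distrib]
        have e1 : ∑ i, ∑ j, (if i = v then z v * (q (g + ev u + ev j) * z j) else 0) = 0 := by
          rw [Finset.sum_comm]
          simp [← Finset.mul_sum, hz']
        have e2 : ∑ i, ∑ j, (if j = v then z v * (q (g + ev u + ev i) * z i) else 0) = 0 := by
          simp [← Finset.mul_sum, hz']
        have e3 : ∑ i, ∑ j, (if i = v then if j = v then q (g + ev u + ev v) * z v * z v else 0 else 0)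
            = q (g + ev u + ev v) * z v * z v := by
          rw [Finset.sum_eq_single v] <;> simp +contextual
        rw [e1, e2, e3]
        nlinarith [hq (g + ev u + ev v), mul_self_nonneg (z v),
          mul_nonneg (hq (g + ev u + ev v)).le (mul_self_nonneg (z v))]
      · intro i j
        unfold HM
        simp only [Matrix.of_apply]
        by_cases hi : i = v
        · subst hi
          simp only [if_true]
          have := hb (g + ev j)
          rw [add_right_comm g (ev i), add_right_comm g (ev u)]
          exact this
        · by_cases hj : j = v
          · subst hj
            simp only [hi, if_false, if_true]
            have := hb (g + ev i)
            rw [this, add_right_comm g (ev u)]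
          · simp only [hi, hj, if_false, mul_zero, add_zero]
            apply ha
            simp [ev, hg, Ne.symm hi, Ne.symm hj]
      · intro j
        simp [HM]
    | succ n ih =>
      intro g hg
      obtain ⟨g', rfl⟩ : ∃ g', g = g' + ev v := by
        refine ⟨g - ev v, ?_⟩
        funext x
        by_cases hx : x = v
        · subst hx; simp [ev, hg]
        · simp [ev, hx]
      have hg' : g' v = n := by simpa [ev] using hg
      refine main (g' + ev v) (HM q (g' + ev u)) (HM_symm _ _) (ih _ ?_) ?_ ?_
      · simp [ev, hg', Ne.symm huv]
      · intro i j
        unfold HM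
        have := hb (g' + ev i + ev j)
        have r : ∀ x : W → ℕ, g' + ev i + ev j + x = g' + x + ev i + ev j := fun x => by abel
        simpa only [r] using this
      · intro j
        unfold HM
        rw [add_right_comm g']
  exact fun g => hind _ g rfl
end

open Finset

lemma entH_zero : entH 0 = 0 := by simp [entH]

lemma oneD_core (C b : ℝ) (k : ℕ) (hb : 0 ≤ b)
    (h : ∀ q : ℝ, 0 < q → q < 1 → C * (q ^ k * (1 - q)) ≤ b) : C ≤ b * Real.exp (entH k) := by
  rcases Nat.eq_zero_or_pos k with rfl | hk
  · simp only [Nat.cast_zero, entH_zero, Real.exp_zero, mul_one]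
    by_contra hc
    push Not at hc
    have hC : 0 < C := lt_of_le_of_lt hb hc
    have := h ((C - b) / (2 * C)) (by apply div_pos <;> linarith)
      (by rw [div_lt_one (by linarith)]; linarith)
    have e : C * (((C - b) / (2 * C)) ^ 0 * (1 - (C - b) / (2 * C))) = (C + b) / 2 := by
      field_simp; ring
    rw [e] at this
    linarith
  · have hk' : (0:ℝ) < k := by exact_mod_cast hk
    have h0 : (0:ℝ) < k / (k + 1) := by positivity
    have h1 : (k:ℝ) / (k + 1) < 1 := by rw [div_lt_one (by positivity)]; linarith
    have := h _ h0 h1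
    have e : ((k:ℝ) / (k + 1)) ^ k * (1 - k / (k + 1)) * Real.exp (entH k) = 1 := by
      have e1 : (1 - (k:ℝ) / (k + 1)) = Real.exp (- Real.log (k + 1)) := by
        rw [Real.exp_neg, Real.exp_log (by positivity)]; field_simp; ring
      have e2 : ((k:ℝ) / (k + 1)) ^ k = Real.exp (k * (Real.log k - Real.log (k+1))) := by
        rw [← Real.log_div (by positivity) (by positivity), mul_comm, Real.exp_mul,
          Real.exp_log h0, Real.rpow_natCast]
      rw [e1, e2, ← Real.exp_add, ← Real.exp_add, entH, Real.exp_eq_one_iff]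
      ring
    calc C = C * (((k:ℝ) / (k + 1)) ^ k * (1 - k / (k + 1))) * Real.exp (entH k) := by
            rw [mul_assoc, e, mul_one]
      _ ≤ _ := by gcongr

/-- ratios of a positive log-concave sequence decrease -/
lemma ratio_anti (b : ℕ → ℝ) (T : ℕ) (hpos : ∀ a ≤ T, 0 < b a)
    (hlc : ∀ a, a + 2 ≤ T → b a * b (a + 2) ≤ b (a + 1) ^ 2) (i d : ℕ) (h : i + d + 1 ≤ T) :
    b (i + d + 1) * b i ≤ b (i + 1) * b (i + d) := by
  induction d with
  | zero => simp
  | succ d ih =>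
    have h1 := ih (by omega)
    have h2 := hlc (i + d) (by omega)
    have p0 := hpos i (by omega)
    have p1 := hpos (i + d) (by omega)
    have p2 := hpos (i + d + 1) (by omega)
    have p3 := hpos (i + d + 2) (by omega)
    show b (i + d + 2) * b i ≤ b (i + 1) * b (i + d + 1)
    have : b (i + d) * (b (i + d + 2) * b i) ≤ b (i + d) * (b (i + 1) * b (i + d + 1)) := by
      nlinarith [mul_le_mul_of_nonneg_right h2 p0.le, mul_le_mul_of_nonneg_left h1 p2.le]
    exact le_of_mul_le_mul_left this p1

lemma majorant (b : ℕ → ℝ) (T k : ℕ) (r : ℝ) (hr : 0 < r)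
    (h1 : ∀ a, k ≤ a → a + 1 ≤ T → b (a + 1) ≤ r * b a)
    (h2 : ∀ a, a < k → r * b a ≤ b (a + 1)) : ∀ a ≤ T, b a * r ^ k ≤ b k * r ^ a := by
  intro a ha
  rcases le_total k a with hka | hka
  · obtain ⟨d, rfl⟩ := Nat.exists_eq_add_of_le hka
    induction d with
    | zero => simp
    | succ d ih =>
      have := ih (by omega) (by omega)
      have h := h1 (k + d) (by omega) (by omega)
      calc b (k + d + 1) * r ^ k ≤ r * b (k + d) * r ^ k := by gcongr
        _ = r * (b (k + d) * r ^ k) := by ring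
        _ ≤ r * (b k * r ^ (k + d)) := by gcongr
        _ = b k * r ^ (k + (d + 1)) := by ring
  · have : ∀ d, d ≤ k → b (k - d) * r ^ k ≤ b k * r ^ (k - d) := by
      intro d
      induction d with
      | zero => simp
      | succ d ih =>
        intro hd
        have i1 := ih (by omega)
        have h := h2 (k - (d + 1)) (by omega)
        have e : k - (d + 1) + 1 = k - d := by omega
        rw [e] at h
        have e2 : r ^ (k - d) = r ^ (k - (d + 1)) * r := by rw [← e, pow_succ]
        rw [e2] at i1
        refine le_of_mul_le_mul_left ?_ hr
        calc r * (b (k - (d+1)) * r ^ k) = (r * b (k - (d+1))) * r ^ k := by ring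
          _ ≤ b (k - d) * r ^ k := by gcongr
          _ ≤ _ := i1
          _ = _ := by ring
    have := this (k - a) (by omega)
    rwa [Nat.sub_sub_self hka] at this

lemma geom_bound (q : ℝ) (h0 : 0 < q) (h1 : q < 1) (n : ℕ) :
    (1 - q) * ∑ a ∈ range n, q ^ a ≤ 1 := by
  have := mul_neg_geom_sum q n
  rw [this]
  have : 0 ≤ q ^ n := by positivity
  linarith

lemma oneD_of_majorant (b : ℕ → ℝ) (T k : ℕ) (r q : ℝ) (hr : 0 < r) (hq0 : 0 < q) (hq1 : q < 1)
    (hbk : 0 ≤ b k) (h : ∀ a ≤ T, b a * r ^ k ≤ b k * r ^ a) :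
    (1 - q) * (∑ a ∈ range (T + 1), b a * (q / r) ^ a) * r ^ k ≤ b k := by
  have : (∑ a ∈ range (T + 1), b a * (q / r) ^ a) * r ^ k ≤ b k * ∑ a ∈ range (T + 1), q ^ a := by
    rw [Finset.sum_mul, Finset.mul_sum]
    refine Finset.sum_le_sum fun a ha => ?_
    have := h a (by simpa [Nat.lt_succ_iff] using ha)
    calc b a * (q / r) ^ a * r ^ k = (b a * r ^ k) * (q / r) ^ a := by ring
      _ ≤ (b k * r ^ a) * (q / r) ^ a := by gcongr
      _ = b k * q ^ a := by rw [div_pow]; field_simp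
  have g := geom_bound q hq0 hq1 (T + 1)
  calc (1 - q) * (∑ a ∈ range (T + 1), b a * (q / r) ^ a) * r ^ k
     = (1 - q) * ((∑ a ∈ range (T + 1), b a * (q / r) ^ a) * r ^ k) := by ring
    _ ≤ (1 - q) * (b k * ∑ a ∈ range (T + 1), q ^ a) := by
        have : 0 ≤ 1 - q := by linarith
        gcongr
    _ = b k * ((1 - q) * ∑ a ∈ range (T + 1), q ^ a) := by ring
    _ ≤ b k * 1 := by gcongr
    _ = b k := mul_one _

lemma oneD_poly (b : ℕ → ℝ) (T k : ℕ) (hk : k ≤ T) (hpos : ∀ a ≤ T, 0 < b a)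
    (hlc : ∀ a, a + 2 ≤ T → b a * b (a + 2) ≤ b (a + 1) ^ 2) (C : ℝ)
    (hC : ∀ t : ℝ, 0 < t → C * t ^ k ≤ ∑ a ∈ range (T + 1), b a * t ^ a) :
    C ≤ b k * Real.exp (entH k) := by
  obtain ⟨r, hr, hm⟩ : ∃ r : ℝ, 0 < r ∧ ∀ a ≤ T, b a * r ^ k ≤ b k * r ^ a := by
    rcases Nat.lt_or_ge k T with hkT | hkT
    · refine ⟨b (k + 1) / b k, div_pos (hpos _ hkT) (hpos _ hk), majorant b T k _
        (div_pos (hpos _ hkT) (hpos _ hk)) ?_ ?_⟩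
      · intro a ha haT
        obtain ⟨d, rfl⟩ := Nat.exists_eq_add_of_le ha
        have := ratio_anti b T hpos hlc k d haT
        rw [div_mul_eq_mul_div, le_div_iff₀ (hpos _ hk)]
        exact this
      · intro a ha
        obtain ⟨d, rfl⟩ := Nat.exists_eq_add_of_le ha.le
        have := ratio_anti b T hpos hlc a d hkT
        rw [div_mul_eq_mul_div, div_le_iff₀ (hpos _ hk)]
        exact this
    · have hkT' : k = T := le_antisymm hk hkT
      subst hkT'
      rcases Nat.eq_zero_or_pos k with rfl | hk0
      · refine ⟨1, one_pos, ?_⟩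
        intro a ha
        have : a = 0 := by omega
        simp [this]
      · obtain ⟨k', rfl⟩ : ∃ k', k = k' + 1 := ⟨k - 1, by omega⟩
        have p1 := hpos (k' + 1) le_rfl
        have p2 := hpos k' (by omega)
        refine ⟨b (k' + 1) / b k', div_pos p1 p2, majorant b _ _ _ (div_pos p1 p2) ?_ ?_⟩
        · intro a h1 h2; omega
        · intro a ha
          obtain ⟨d, rfl⟩ := Nat.exists_eq_add_of_le (Nat.lt_succ_iff.mp ha)
          have := ratio_anti b _ hpos hlc a d le_rfl
          rw [div_mul_eq_mul_div, div_le_iff₀ p2]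
          exact this
  refine oneD_core C (b k) k (hpos _ hk).le fun q hq0 hq1 => ?_
  have h1 := oneD_of_majorant b T k r q hr hq0 hq1 (hpos _ hk).le hm
  have h2 := hC (q / r) (div_pos hq0 hr)
  have : 0 ≤ 1 - q := by linarith
  calc C * (q ^ k * (1 - q)) = (1 - q) * (C * (q / r) ^ k) * r ^ k := by
        rw [div_pow]; field_simp
    _ ≤ (1 - q) * (∑ a ∈ range (T + 1), b a * (q / r) ^ a) * r ^ k := by gcongr
    _ ≤ _ := h1

lemma geo_entropy (s M : ℝ) (h0 : 0 < s) (h1 : s < 1) (hM : 0 ≤ M) :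
    s ^ M * Real.exp (entH M) ≤ (1 - s)⁻¹ := by
  have hs : 0 < 1 - s := by linarith
  rw [Real.rpow_def_of_pos h0, ← Real.exp_add, ← Real.exp_log (inv_pos.mpr hs), Real.exp_le_exp,
    Real.log_inv, entH]
  have a2 := Real.log_le_sub_one_of_pos (x := (1 - s) * (M + 1)) (by positivity)
  rw [Real.log_mul (by positivity) (by positivity)] at a2
  rcases hM.eq_or_lt with rfl | hM
  · simp at a2 ⊢
    linarith
  · have a1 := Real.log_le_sub_one_of_pos (x := s * (M + 1) / M) (by positivity)
    rw [Real.log_div (by positivity) (by positivity), Real.log_mul (by positivity) (by positivity)] at a1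
    have := mul_le_mul_of_nonneg_left a1 hM.le
    have e : M * (s * (M + 1) / M - 1) = s * (M + 1) - M := by field_simp
    rw [e] at this
    nlinarith

open Finset
set_option linter.unusedSectionVars false

section
variable {W : Type*} [Fintype W] [DecidableEq W]

noncomputable def gauss (lam : ℝ) (g : W → ℕ) (x : W → ℕ) : ℝ :=
  Real.exp (-lam * ∑ i, ((x i : ℝ) - g i) ^ 2)

lemma gauss_lor (lam : ℝ) (hl : 0 < lam) (g : W → ℕ) : LorP (gauss lam g) := by
  intro x
  set u : W → ℝ := fun i => Real.exp (-2 * lam * ((x i : ℝ) - g i)) with hu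
  set K : ℝ := Real.exp (-lam * (∑ i, ((x i : ℝ) - g i) ^ 2) - 2 * lam) with hK
  set d : ℝ := 1 - Real.exp (-2 * lam) with hd
  have hd0 : 0 ≤ d := by
    rw [hd, sub_nonneg, Real.exp_le_one_iff]; linarith
  have hM : ∀ i j, HM (gauss lam g) x i j = K * (u i * u j - if i = j then d * (u i * u j) else 0) := by
    intro i j
    unfold HM gauss
    have e : ∑ k, ((((x + ev i + ev j) k : ℕ) : ℝ) - g k) ^ 2
        = (∑ k, ((x k : ℝ) - g k) ^ 2) + 2 * ((x i : ℝ) - g i) + 2 * ((x j : ℝ) - g j) + 2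
          + if i = j then 2 else 0 := by
      have : ∀ k, ((((x + ev i + ev j) k : ℕ) : ℝ) - g k) ^ 2 = ((x k : ℝ) - g k) ^ 2
          + (if k = i then 2 * ((x i : ℝ) - g i) else 0) + (if k = j then 2 * ((x j : ℝ) - g j) else 0)
          + (if k = i then 1 else 0) + (if k = j then 1 else 0)
          + (if k = i then if i = j then 2 else 0 else 0) := by
        intro k
        by_cases h1 : k = i
        · subst h1
          by_cases h2 : k = j
          · subst h2; simp [ev]; ring
          · simp [ev, h2]; ring
        · by_cases h2 : k = j
          · subst h2; simp [ev, h1]; ring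
          · simp [ev, h1, h2]
      simp only [this, Finset.sum_add_distrib, Finset.sum_ite_eq', Finset.mem_univ, if_true]
      ring
    rw [e]
    by_cases hij : i = j
    · subst hij
      simp only [if_true]
      rw [show u i * u i - d * (u i * u i) = Real.exp (-2 * lam) * (u i * u i) by rw [hd]; ring]
      rw [hK, hu]
      simp only [← Real.exp_add]
      congr 1; ring
    · simp only [hij, if_false, sub_zero]
      rw [hK, hu]
      simp only [← Real.exp_add]
      congr 1; ring
  refine ⟨∑ i, u i • LinearMap.proj i, fun z hz => ?_⟩
  have hz' : ∑ i, u i * z i = 0 := by simpa using hz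
  rw [Matrix.toBilin'_apply]
  have e : ∀ i j, z i * HM (gauss lam g) x i j * z j = K * ((u i * z i) * (u j * z j))
      - if i = j then K * d * ((u i * z i) * (u i * z i)) else 0 := by
    intro i j
    rw [hM]
    by_cases hij : i = j
    · subst hij; simp; ring
    · simp [hij]; ring
  simp only [e, Finset.sum_sub_distrib, ← Finset.mul_sum, hz', mul_zero, Finset.sum_ite_eq,
    Finset.mem_univ, if_true, zero_sub]
  refine Finset.sum_nonpos fun i _ => ?_
  rw [neg_nonpos]
  have := mul_self_nonneg (u i * z i)
  have : 0 < K := Real.exp_pos _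
  positivity

lemma gauss_lim (g x : W → ℕ) :
    Filter.Tendsto (fun lam => gauss lam g x) Filter.atTop (nhds (if x = g then 1 else 0)) := by
  by_cases h : x = g
  · subst h; simp [gauss]
  · simp only [h, if_false]
    unfold gauss
    have hp : 0 < ∑ i, ((x i : ℝ) - g i) ^ 2 := by
      obtain ⟨i, hi⟩ := Function.ne_iff.mp h
      refine Finset.sum_pos' (fun i _ => sq_nonneg _) ⟨i, by simp, ?_⟩
      have : (x i : ℝ) - g i ≠ 0 := by
        rw [sub_ne_zero]; exact_mod_cast hi
      positivity
    apply Real.tendsto_exp_atBot.comp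
    have := (Filter.tendsto_neg_atTop_atBot).atBot_mul_const hp
    exact this

lemma gauss_ge (lam : ℝ) (g x : W → ℕ) : (if x = g then (1:ℝ) else 0) ≤ gauss lam g x := by
  by_cases h : x = g
  · subst h; simp [gauss]
  · simp only [h, if_false]; exact (Real.exp_pos _).le
end

section
variable {R C : Type*} [Fintype R] [DecidableEq R] [Fintype C] [DecidableEq C]

/-- monomial weight -/
def wt (c : R → C → ℝ) (m : R → C → ℕ) : ℝ := ∏ i, ∏ j, c i j ^ m i j

def unitM (i : R) (j : C) : R → C → ℕ := Pi.single i (Pi.single j 1)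

lemma unitM_apply (i : R) (j : C) (a : R) (b : C) :
    unitM i j a b = if a = i ∧ b = j then 1 else 0 := by
  unfold unitM
  by_cases h : a = i
  · subst h; by_cases h2 : b = j
    · subst h2; simp
    · simp [h2]
  · simp [h]

lemma wt_add (c : R → C → ℝ) (m : R → C → ℕ) (i : R) (j : C) :
    wt c (m + unitM i j) = c i j * wt c m := by
  have : wt c (unitM i j) = c i j := by
    unfold wt
    simp only [unitM_apply]
    rw [Finset.prod_eq_single i, Finset.prod_eq_single j]
    · simp
    · intro b _ hb; simp [hb]
    · simp
    · intro b _ hb; simp [hb]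
    · simp
  rw [← this]
  unfold wt
  rw [← Finset.prod_mul_distrib]
  refine Finset.prod_congr rfl fun a _ => ?_
  rw [← Finset.prod_mul_distrib]
  refine Finset.prod_congr rfl fun b _ => ?_
  simp only [Pi.add_apply, pow_add]
  ring

lemma wt_pos (c : R → C → ℝ) (hc : ∀ i j, 0 < c i j) (m : R → C → ℕ) : 0 < wt c m :=
  Finset.prod_pos fun i _ => Finset.prod_pos fun j _ => pow_pos (hc i j) _

/-- remaining vector after removing the table `m` -/
def subM (pr : C → C) (g : R ⊕ C → ℕ) (m : R → C → ℕ) : R ⊕ C → ℕ :=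
  Sum.elim (fun i => g (Sum.inl i) - ∑ j, m i j)
    (fun l => g (Sum.inr l) + ∑ j, if pr j = l then ∑ i, m i j else 0)

def SE (E : Finset (R × C)) (g : R ⊕ C → ℕ) : Finset (R → C → ℕ) :=
  (Fintype.piFinset fun i => Fintype.piFinset fun _ : C => range (g (Sum.inl i) + 1)).filter
    fun m => (∀ i j, (i, j) ∉ E → m i j = 0) ∧ ∀ i, ∑ j, m i j ≤ g (Sum.inl i)

lemma mem_SE (E : Finset (R × C)) (g : R ⊕ C → ℕ) (m : R → C → ℕ) :
    m ∈ SE E g ↔ (∀ i j, (i, j) ∉ E → m i j = 0) ∧ ∀ i, ∑ j, m i j ≤ g (Sum.inl i) := by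
  unfold SE
  simp only [Finset.mem_filter, Fintype.mem_piFinset, Finset.mem_range, and_iff_right_iff_imp]
  intro h i j
  have := Finset.single_le_sum (f := fun j => m i j) (fun _ _ => Nat.zero_le _) (Finset.mem_univ j)
  have h2 := h.2 i
  omega

def PE (p0 : (R ⊕ C → ℕ) → ℝ) (pr : C → C) (c : R → C → ℝ) (E : Finset (R × C))
    (g : R ⊕ C → ℕ) : ℝ := ∑ m ∈ SE E g, wt c m * p0 (subM pr g m)

lemma PE_pos (p0 : (R ⊕ C → ℕ) → ℝ) (hp : ∀ g, 0 < p0 g) (pr : C → C) (c : R → C → ℝ)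
    (hc : ∀ i j, 0 < c i j) (E : Finset (R × C)) (g : R ⊕ C → ℕ) : 0 < PE p0 pr c E g := by
  refine Finset.sum_pos (fun m _ => mul_pos (wt_pos c hc m) (hp _)) ⟨0, ?_⟩
  rw [mem_SE]; simp

lemma PE_zero (p0 : (R ⊕ C → ℕ) → ℝ) (pr : C → C) (c : R → C → ℝ) (E : Finset (R × C))
    (g : R ⊕ C → ℕ) (i : R) (j : C) (h : g (Sum.inl i) = 0) :
    PE p0 pr c (insert (i, j) E) g = PE p0 pr c E g := by
  unfold PE
  congr 1
  ext m
  rw [mem_SE, mem_SE]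
  constructor
  · rintro ⟨h1, h2⟩
    refine ⟨fun a b hab => ?_, h2⟩
    by_cases he : (a, b) = (i, j)
    · obtain ⟨rfl, rfl⟩ := Prod.mk.inj he
      have := h2 a
      rw [h, Nat.le_zero, Finset.sum_eq_zero_iff] at this
      exact this b (Finset.mem_univ _)
    · exact h1 a b (by simp only [Finset.mem_insert, not_or]; exact ⟨he, hab⟩)
  · rintro ⟨h1, h2⟩
    exact ⟨fun a b hab => h1 a b (fun h => hab (Finset.mem_insert_of_mem h)), h2⟩

lemma row_add (m : R → C → ℕ) (i : R) (j : C) (a : R) :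
    ∑ b, (m + unitM i j) a b = (∑ b, m a b) + if a = i then 1 else 0 := by
  simp only [Pi.add_apply, Finset.sum_add_distrib, unitM_apply]
  by_cases h : a = i <;> simp [h]

lemma col_add (m : R → C → ℕ) (i : R) (j : C) (b : C) :
    ∑ a, (m + unitM i j) a b = (∑ a, m a b) + if b = j then 1 else 0 := by
  simp only [Pi.add_apply, Finset.sum_add_distrib, unitM_apply]
  by_cases h : b = j <;> simp [h]

lemma subM_add (pr : C → C) (g : R ⊕ C → ℕ) (m : R → C → ℕ) (i : R) (j : C) :
    subM pr (g + ev (Sum.inl i)) (m + unitM i j) = subM pr (g + ev (Sum.inr (pr j))) m := by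
  funext x
  cases x with
  | inl a =>
    simp only [subM, Sum.elim_inl, row_add]
    by_cases h : a = i
    · subst h; simp [ev]
    · simp [ev, h]
  | inr l =>
    simp only [subM, Sum.elim_inr, col_add]
    have : ∀ b, (if pr b = l then (∑ a, m a b) + (if b = j then 1 else 0) else 0)
        = (if pr b = l then (∑ a, m a b) else 0) + if b = j then (if pr j = l then 1 else 0) else 0 := by
      intro b
      by_cases h : b = j
      · subst h; by_cases h2 : pr b = l <;> simp [h2]
      · simp [h]
    simp only [this, Finset.sum_add_distrib, Finset.sum_ite_eq', Finset.mem_univ, if_true]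
    by_cases h : pr j = l
    · subst h; simp [ev]; ring
    · simp [ev, h, Ne.symm h]

lemma PE_succ (p0 : (R ⊕ C → ℕ) → ℝ) (pr : C → C) (c : R → C → ℝ) (E : Finset (R × C))
    (g : R ⊕ C → ℕ) (i : R) (j : C) (he : (i, j) ∉ E) :
    PE p0 pr c (insert (i, j) E) (g + ev (Sum.inl i)) = PE p0 pr c E (g + ev (Sum.inl i))
      + c i j * PE p0 pr c (insert (i, j) E) (g + ev (Sum.inr (pr j))) := by
  unfold PE
  rw [← Finset.sum_filter_add_sum_filter_not _ (fun m => m i j = 0)]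
  congr 1
  · apply Finset.sum_congr _ (fun _ _ => rfl)
    ext m
    rw [Finset.mem_filter, mem_SE, mem_SE]
    constructor
    · rintro ⟨⟨h1, h2⟩, h3⟩
      refine ⟨fun a b hab => ?_, h2⟩
      by_cases he : (a, b) = (i, j)
      · obtain ⟨rfl, rfl⟩ := Prod.mk.inj he; exact h3
      · exact h1 a b (by simp only [Finset.mem_insert, not_or]; exact ⟨he, hab⟩)
    · rintro ⟨h1, h2⟩
      exact ⟨⟨fun a b hab => h1 a b (fun h => hab (Finset.mem_insert_of_mem h)), h2⟩, h1 i j he⟩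
  · rw [Finset.mul_sum]
    have hsub : ∀ m : R → C → ℕ, m i j ≠ 0 → (m - unitM i j) + unitM i j = m := by
      intro m hm
      funext a b
      simp only [Pi.add_apply, Pi.sub_apply, unitM_apply]
      by_cases h : a = i ∧ b = j
      · obtain ⟨rfl, rfl⟩ := h; simp; omega
      · simp [h]
    symm
    refine Finset.sum_bij' (fun m _ => m + unitM i j) (fun m _ => m - unitM i j) ?_ ?_ ?_ ?_ ?_
    · intro m hm
      rw [mem_SE] at hm
      rw [Finset.mem_filter, mem_SE]
      refine ⟨⟨fun a b hab => ?_, fun a => ?_⟩, ?_⟩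
      · have : ¬ (a = i ∧ b = j) := by
          rintro ⟨rfl, rfl⟩; simp at hab
        simp only [Pi.add_apply, unitM_apply, this, if_false, hm.1 a b hab]
      · rw [row_add]
        have := hm.2 a
        simp only [Pi.add_apply, ev] at this ⊢
        by_cases h : a = i
        · subst h; simpa using this
        · simpa [h] using this
      · simp [unitM_apply]
    · intro m hm
      rw [Finset.mem_filter, mem_SE] at hm
      obtain ⟨⟨h1, h2⟩, h3⟩ := hm
      rw [mem_SE]
      refine ⟨fun a b hab => ?_, fun a => ?_⟩
      · simp [h1 a b hab]
      · have := h2 a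
        rw [← hsub m h3, row_add] at this
        simp only [Pi.add_apply, ev] at this ⊢
        by_cases h : a = i
        · subst h; simpa using this
        · simpa [h] using this
    · intro m _; simp
    · intro m hm
      exact hsub m (Finset.mem_filter.mp hm).2
    · intro m _
      rw [wt_add, subM_add]; ring

lemma PE_lor (p0 : (R ⊕ C → ℕ) → ℝ) (hp : ∀ g, 0 < p0 g) (hL : LorP p0) (pr : C → C)
    (c : R → C → ℝ) (hc : ∀ i j, 0 < c i j) (E : Finset (R × C)) : LorP (PE p0 pr c E) := by
  induction E using Finset.induction_on with
  | empty =>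
    have : PE p0 pr c ∅ = p0 := by
      funext g
      have hS : SE (∅ : Finset (R × C)) g = {0} := by
        ext m
        rw [mem_SE, Finset.mem_singleton]
        constructor
        · rintro ⟨h, -⟩; funext i j; exact h i j (by simp)
        · rintro rfl; simp
      unfold PE
      rw [hS, Finset.sum_singleton]
      have : subM pr g (0 : R → C → ℕ) = g := by
        funext x; cases x <;> simp [subM]
      rw [this]; simp [wt]
    rw [this]; exact hL
  | insert e E he ih =>
    obtain ⟨i, j⟩ := e
    exact LorP.step (PE_pos p0 hp pr c hc E) (PE_pos p0 hp pr c hc _) (Sum.inr (pr j)) (Sum.inl i)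
      (by simp) (c i j) (hc i j).le (fun g hg => PE_zero p0 pr c E g i j hg)
      (fun g => PE_succ p0 pr c E g i j he) ih
end

open Finset

lemma lc_step (b b' : ℕ → ℝ) (c : ℝ) (hc : 0 < c) (hb : ∀ a, 0 < b a)
    (hlc : ∀ a, b a * b (a + 2) ≤ b (a + 1) ^ 2) (h0 : b' 0 = b 0)
    (h1 : ∀ a, b' (a + 1) = b (a + 1) + c * b' a) :
    (∀ a, 0 < b' a) ∧ ∀ a, b' a * b' (a + 2) ≤ b' (a + 1) ^ 2 := by
  have hp : ∀ a, 0 < b' a := by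
    intro a
    induction a with
    | zero => rw [h0]; exact hb 0
    | succ a ih => rw [h1]; have := hb (a + 1); positivity
  have claim : ∀ a, b' a * b (a + 2) ≤ b' (a + 1) * b (a + 1) := by
    intro a
    induction a with
    | zero =>
      rw [h1, h0]
      nlinarith [hlc 0, mul_pos hc (mul_pos (hb 0) (hb 1))]
    | succ a ih =>
      have h2 := hlc (a + 1)
      have e : b' a * b (a + 3) ≤ b' (a + 1) * b (a + 2) := by
        have p1 := hb (a + 1)
        have p2 := hb (a + 2)
        have p3 := hb (a + 3)
        have : (b (a + 1) * b (a + 2)) * (b' a * b (a + 3))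
            ≤ (b (a + 1) * b (a + 2)) * (b' (a + 1) * b (a + 2)) := by
          calc (b (a + 1) * b (a + 2)) * (b' a * b (a + 3))
              = (b' a * b (a + 2)) * (b (a + 1) * b (a + 3)) := by ring
            _ ≤ (b' (a + 1) * b (a + 1)) * (b (a + 2) ^ 2) := by
              apply mul_le_mul ih h2 (by positivity)
              have := hp (a + 1); positivity
            _ = _ := by ring
        exact le_of_mul_le_mul_left this (by positivity)
      show b' (a + 1) * b (a + 3) ≤ b' (a + 2) * b (a + 2)
      have h2' : b (a + 1) * b (a + 3) ≤ b (a + 2) ^ 2 := h2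
      have q1 : b' (a + 2) = b (a + 2) + c * b' (a + 1) := h1 (a + 1)
      have e' := mul_le_mul_of_nonneg_left e hc.le
      calc b' (a + 1) * b (a + 3) = b (a + 1) * b (a + 3) + c * (b' a * b (a + 3)) := by
            rw [h1 a]; ring
        _ ≤ b (a + 2) ^ 2 + c * (b' (a + 1) * b (a + 2)) := add_le_add h2' e'
        _ = _ := by rw [q1]; ring
  refine ⟨hp, fun a => ?_⟩
  have := claim a
  show b' a * b' (a + 2) ≤ _
  have q1 : b' (a + 2) = b (a + 2) + c * b' (a + 1) := h1 (a + 1)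
  calc b' a * b' (a + 2) = b' a * b (a + 2) + c * b' a * b' (a + 1) := by rw [q1]; ring
    _ ≤ b' (a + 1) * b (a + 1) + c * b' a * b' (a + 1) := by linarith
    _ = b' (a + 1) * (b (a + 1) + c * b' a) := by ring
    _ = _ := by rw [← h1 a]; ring

noncomputable def gps {C : Type*} (c : C → ℝ) (s : Finset C) : PowerSeries ℝ :=
  ∏ j ∈ s, PowerSeries.mk (fun a => c j ^ a)

lemma gps_insert {C : Type*} [DecidableEq C] (c : C → ℝ) (s : Finset C) (j : C) (hj : j ∉ s) :
    gps c (insert j s) = gps c s + PowerSeries.C (c j) * (PowerSeries.X * gps c (insert j s)) := by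
  have h : PowerSeries.mk (fun a => c j ^ a) = 1 + PowerSeries.C (c j) *
      (PowerSeries.X * PowerSeries.mk (fun a => c j ^ a)) := by
    ext a
    cases a with
    | zero => simp
    | succ a => simp [PowerSeries.coeff_succ_X_mul, PowerSeries.coeff_one, pow_succ']
  unfold gps
  rw [Finset.prod_insert hj]
  nth_rewrite 1 [h]
  ring

lemma gps_lc {C : Type*} [DecidableEq C] (c : C → ℝ) (hc : ∀ j, 0 < c j) (s : Finset C)
    (hs : s.Nonempty) :
    (∀ a, 0 < PowerSeries.coeff a (gps c s)) ∧
    (∀ a, PowerSeries.coeff a (gps c s) * PowerSeries.coeff (a + 2) (gps c s)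
      ≤ PowerSeries.coeff (a + 1) (gps c s) ^ 2) ∧
    (∀ j ∈ s, ∀ a, c j * PowerSeries.coeff a (gps c s) ≤ PowerSeries.coeff (a + 1) (gps c s)) := by
  have key : (∀ a, 0 < PowerSeries.coeff a (gps c s)) ∧
    (∀ a, PowerSeries.coeff a (gps c s) * PowerSeries.coeff (a + 2) (gps c s)
      ≤ PowerSeries.coeff (a + 1) (gps c s) ^ 2) := by
    induction hs using Finset.Nonempty.cons_induction with
    | singleton j =>
      refine ⟨fun a => ?_, fun a => ?_⟩
      · simp [gps]; exact pow_pos (hc j) a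
      · simp [gps]; apply le_of_eq; ring
    | cons j s hj hs ih =>
      rw [Finset.cons_eq_insert]
      refine lc_step (fun a => PowerSeries.coeff a (gps c s)) (fun a => PowerSeries.coeff a (gps c (insert j s)))
        (c j) (hc j) ih.1 ih.2 ?_ ?_
      · show PowerSeries.coeff 0 _ = PowerSeries.coeff 0 _
        rw [gps_insert c s j hj]; simp
      · intro a
        show PowerSeries.coeff _ _ = _
        rw [gps_insert c s j hj, map_add, PowerSeries.coeff_C_mul, PowerSeries.coeff_succ_X_mul,
          ← gps_insert c s j hj]
  refine ⟨key.1, key.2, fun j hj a => ?_⟩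
  have h := gps_insert c (s.erase j) j (by simp)
  rw [Finset.insert_erase hj] at h
  have h2 := congrArg (PowerSeries.coeff (a + 1)) h
  rw [map_add, PowerSeries.coeff_C_mul, PowerSeries.coeff_succ_X_mul] at h2
  have : 0 ≤ PowerSeries.coeff (a + 1) (gps c (s.erase j)) := by
    unfold gps
    rw [PowerSeries.coeff_prod]
    refine Finset.sum_nonneg fun l _ => Finset.prod_nonneg fun i _ => ?_
    rw [PowerSeries.coeff_mk]
    exact pow_nonneg (hc i).le _
  linarith

lemma gps_sum {C : Type*} [DecidableEq C] (c : C → ℝ) (hc : ∀ j, 0 < c j) (t : ℝ) (ht : 0 < t)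
    (s : Finset C) (h : ∀ j ∈ s, t * c j < 1) :
    Summable (fun a => ‖PowerSeries.coeff a (gps c s) * t ^ a‖) ∧
    ∑' a, PowerSeries.coeff a (gps c s) * t ^ a = ∏ j ∈ s, (1 - t * c j)⁻¹ := by
  induction s using Finset.induction_on with
  | empty =>
    have e : ∀ a, PowerSeries.coeff a (gps c ∅) * t ^ a = if a = 0 then 1 else 0 := by
      intro a
      by_cases ha : a = 0 <;> simp [gps, ha, PowerSeries.coeff_one]
    simp only [e]
    refine ⟨summable_of_ne_finset_zero (s := {0}) ?_, by simp⟩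
    intro b hb
    simp at hb
    simp [hb]
  | insert j s hj ih =>
    obtain ⟨i1, i2⟩ := ih (fun k hk => h k (by simp [hk]))
    have hj1 : t * c j < 1 := h j (by simp)
    have hj0 : 0 < t * c j := mul_pos ht (hc j)
    have g1 : Summable (fun a => ‖(t * c j) ^ a‖) := by
      have := summable_geometric_of_lt_one hj0.le hj1
      exact this.norm
    have e : ∀ a, PowerSeries.coeff a (gps c (insert j s)) * t ^ a =
        ∑ kl ∈ antidiagonal a, (t * c j) ^ kl.1 * (PowerSeries.coeff kl.2 (gps c s) * t ^ kl.2) := by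
      intro a
      unfold gps
      rw [Finset.prod_insert hj, PowerSeries.coeff_mul, Finset.sum_mul]
      refine Finset.sum_congr rfl fun x hx => ?_
      rw [PowerSeries.coeff_mk, ← Finset.HasAntidiagonal.mem_antidiagonal.mp hx]
      ring
    simp only [e]
    refine ⟨summable_norm_sum_mul_antidiagonal_of_summable_norm (f := fun a => (t * c j) ^ a)
      (g := fun a => PowerSeries.coeff a (gps c s) * t ^ a) g1 i1, ?_⟩
    rw [← tsum_mul_tsum_eq_tsum_sum_antidiagonal_of_summable_norm (f := fun a => (t * c j) ^ a)
      (g := fun a => PowerSeries.coeff a (gps c s) * t ^ a) g1 i1, i2,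
      tsum_geometric_of_lt_one hj0.le hj1, Finset.prod_insert hj]

lemma row_lemma {C : Type*} [Fintype C] [DecidableEq C] [Nonempty C] (c : C → ℝ)
    (hc : ∀ j, 0 < c j) (M : C → ℝ) (hM : ∀ j, 0 ≤ M j) (k : ℕ) (hs : ∑ j, M j = k) :
    (∏ j, c j ^ (M j) * Real.exp (entH (M j))) ≤
      (∑ f ∈ piAntidiag univ k, ∏ j, c j ^ f j) * Real.exp (entH k) := by
  obtain ⟨h1, h2, h3⟩ := gps_lc c hc univ Finset.univ_nonempty
  have e : (∑ f ∈ piAntidiag univ k, ∏ j, c j ^ f j) = PowerSeries.coeff k (gps c univ) := by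
    unfold gps
    rw [PowerSeries.coeff_prod]
    refine Finset.sum_bij' (fun f _ => Finsupp.equivFunOnFinite.symm f) (fun f _ => ⇑f) ?_ ?_ ?_ ?_ ?_
    · intro f hf; simpa using hf
    · intro f hf; simpa using hf
    · intro f hf; rfl
    · intro f hf; ext; rfl
    · intro f hf; simp
  rw [e]
  set b : ℕ → ℝ := fun a => PowerSeries.coeff a (gps c univ) with hb
  refine oneD_core _ _ k (h1 k).le fun q hq0 hq1 => ?_
  set r := b (k + 1) / b k with hr
  have hr0 : 0 < r := div_pos (h1 _) (h1 _)
  have hrc : ∀ j, c j ≤ r := fun j => by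
    rw [hr, le_div_iff₀ (h1 k)]; exact h3 j (by simp) k
  have hm : ∀ T, (1 - q) * (∑ a ∈ range (T + 1), b a * (q / r) ^ a) * r ^ k ≤ b k := by
    intro T
    refine oneD_of_majorant b T k r q hr0 hq0 hq1 (h1 k).le ?_
    refine majorant b T k r hr0 ?_ ?_
    · intro a ha _
      obtain ⟨d, rfl⟩ := Nat.exists_eq_add_of_le ha
      have := ratio_anti b (k + d + 1) (fun a _ => h1 a) (fun a _ => h2 a) k d le_rfl
      rw [hr, div_mul_eq_mul_div, le_div_iff₀ (h1 k)]
      exact this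
    · intro a ha
      obtain ⟨d, rfl⟩ := Nat.exists_eq_add_of_lt ha
      have := ratio_anti b (a + d + 2) (fun a _ => h1 a) (fun a _ => h2 a) a (d + 1) (by omega)
      rw [hr, div_mul_eq_mul_div, div_le_iff₀ (h1 _)]
      exact this
  set t := q / r with ht
  have ht0 : 0 < t := div_pos hq0 hr0
  have htc : ∀ j, t * c j < 1 := by
    intro j
    calc t * c j ≤ t * r := by gcongr; exact hrc j
      _ = q := by rw [ht]; field_simp
      _ < 1 := hq1
  obtain ⟨s1, s2⟩ := gps_sum c hc t ht0 univ (fun j _ => htc j)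
  have hlim : (1 - q) * (∏ j, (1 - t * c j)⁻¹) * r ^ k ≤ b k := by
    rw [← s2]
    have s3 := (s1.of_norm.hasSum.tendsto_sum_nat).comp (Filter.tendsto_add_atTop_nat 1)
    exact le_of_tendsto' ((s3.const_mul (1 - q)).mul_const (r ^ k)) hm
  have hprod : t ^ k * (∏ j, c j ^ (M j) * Real.exp (entH (M j))) ≤ ∏ j, (1 - t * c j)⁻¹ := by
    have : t ^ k = ∏ j, t ^ (M j) := by
      rw [← Real.rpow_natCast, ← hs, Real.rpow_sum_of_pos ht0]
    rw [this, ← Finset.prod_mul_distrib]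
    refine Finset.prod_le_prod (fun j _ => ?_) (fun j _ => ?_)
    · have := hc j; positivity
    · rw [← mul_assoc, ← Real.mul_rpow ht0.le (hc j).le]
      exact geo_entropy _ _ (mul_pos ht0 (hc j)) (htc j) (hM j)
  have hq : q = t * r := by rw [ht]; field_simp
  calc _ = (1 - q) * (t ^ k * (∏ j, c j ^ (M j) * Real.exp (entH (M j)))) * r ^ k := by
        nth_rewrite 1 [hq]; rw [mul_pow]; ring
    _ ≤ (1 - q) * (∏ j, (1 - t * c j)⁻¹) * r ^ k := by
        have : 0 ≤ 1 - q := by linarith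
        gcongr
    _ ≤ _ := hlim

open Finset
set_option linter.unusedSectionVars false

section
variable {R C : Type*} [Fintype R] [DecidableEq R] [Fintype C] [DecidableEq C]

/-- tables with given row sums -/
def Tab (al : R → ℕ) : Finset (R → C → ℕ) := Fintype.piFinset fun i => piAntidiag univ (al i)

lemma mem_Tab (al : R → ℕ) (m : R → C → ℕ) : m ∈ Tab al ↔ ∀ i, ∑ j, m i j = al i := by
  simp [Tab, Fintype.mem_piFinset]

/-- weighted number of tables with right row sums, and right column sums over `F`. -/
def GF (al : R → ℕ) (be : C → ℕ) (F : Finset C) (c : R → C → ℝ) : ℝ :=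
  ∑ m ∈ (Tab al).filter (fun m : R → C → ℕ => ∀ j ∈ F, ∑ i, m i j = be j), wt c m

/-- scale a column -/
def scol (c : R → C → ℝ) (w : C) (t : ℝ) : R → C → ℝ := fun i j => if j = w then t * c i j else c i j

lemma wt_scol (c : R → C → ℝ) (w : C) (t : ℝ) (m : R → C → ℕ) :
    wt (scol c w t) m = wt c m * t ^ (∑ i, m i w) := by
  unfold wt scol
  rw [← Finset.prod_pow_eq_pow_sum, ← Finset.prod_mul_distrib]
  refine Finset.prod_congr rfl fun i _ => ?_
  have : ∀ j, (if j = w then t * c i j else c i j) ^ m i j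
      = c i j ^ m i j * if j = w then t ^ m i w else 1 := by
    intro j
    by_cases h : j = w
    · subst h; simp [mul_pow]; ring
    · simp [h]
  simp only [this, Finset.prod_mul_distrib, Finset.prod_ite_eq', Finset.mem_univ, if_true]

/-- fibre sums over the column `w` -/
def ba (al : R → ℕ) (be : C → ℕ) (F : Finset C) (c : R → C → ℝ) (w : C) (a : ℕ) : ℝ :=
  ∑ m ∈ (Tab al).filter (fun m : R → C → ℕ => (∀ j ∈ F, ∑ i, m i j = be j) ∧ ∑ i, m i w = a), wt c m

lemma tab_total (al : R → ℕ) (be : C → ℕ) (hab : ∑ i, al i = ∑ j, be j) (F : Finset C)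
    (m : R → C → ℕ) (hm : ∀ i, ∑ j, m i j = al i) (hF : ∀ j ∈ F, ∑ i, m i j = be j) :
    ∑ j ∈ Fᶜ, ∑ i, m i j = ∑ j ∈ Fᶜ, be j := by
  have h1 : ∑ j, ∑ i, m i j = ∑ j, be j := by
    rw [← hab, Finset.sum_comm]; exact Finset.sum_congr rfl fun i _ => hm i
  rw [← Finset.sum_add_sum_compl F, ← Finset.sum_add_sum_compl F be, Finset.sum_congr rfl hF] at h1
  exact Nat.add_left_cancel h1

lemma GF_scol (al : R → ℕ) (be : C → ℕ) (hab : ∑ i, al i = ∑ j, be j) (F : Finset C)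
    (c : R → C → ℝ) (w : C) (hw : w ∉ F) (t : ℝ) :
    GF al be F (scol c w t) = ∑ a ∈ range (∑ j ∈ Fᶜ, be j + 1), ba al be F c w a * t ^ a := by
  unfold GF
  rw [← Finset.sum_fiberwise_of_maps_to (t := range (∑ j ∈ Fᶜ, be j + 1))
    (g := fun m : R → C → ℕ => ∑ i, m i w)]
  · refine Finset.sum_congr rfl fun a _ => ?_
    unfold ba
    rw [Finset.filter_filter, Finset.sum_mul]
    refine Finset.sum_congr rfl fun m hm => ?_
    rw [wt_scol, (Finset.mem_filter.mp hm).2.2]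
  · intro m hm
    rw [Finset.mem_filter, mem_Tab] at hm
    rw [Finset.mem_range, Nat.lt_succ_iff, ← tab_total al be hab F m hm.1 hm.2]
    exact Finset.single_le_sum (f := fun j => ∑ i, m i j) (fun _ _ => Nat.zero_le _)
      (by simpa using hw)

def prj (F : Finset C) (w j0 : C) (j : C) : C := if j ∈ F ∨ j = w then j else j0

/-- the target vector -/
def tgt (be : C → ℕ) (F : Finset C) (w j0 : C) : R ⊕ C → ℕ :=
  Sum.elim (fun _ => 0) (fun l => if l ∈ F then be l else
    if l = w ∨ l = j0 then ∑ j ∈ Fᶜ, be j else 0)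

/-- the start vector -/
def stv (al : R → ℕ) (w j0 : C) (a b : ℕ) : R ⊕ C → ℕ :=
  Sum.elim al (fun l => if l = j0 then a else if l = w then b else 0)

lemma sub_eq_tgt (al : R → ℕ) (be : C → ℕ) (hab : ∑ i, al i = ∑ j, be j) (F : Finset C)
    (w j0 : C) (hw : w ∉ F) (hj : j0 ∉ F) (hwj : w ≠ j0) (a : ℕ) (ha : a ≤ ∑ j ∈ Fᶜ, be j)
    (m : R → C → ℕ) :
    (m ∈ SE univ (stv al w j0 a (∑ j ∈ Fᶜ, be j - a)) ∧
      subM (prj F w j0) (stv al w j0 a (∑ j ∈ Fᶜ, be j - a)) m = tgt be F w j0) ↔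
    m ∈ (Tab al).filter (fun m : R → C → ℕ => (∀ j ∈ F, ∑ i, m i j = be j) ∧ ∑ i, m i w = a) := by
  set T := ∑ j ∈ Fᶜ, be j with hT
  rw [mem_SE, Finset.mem_filter, mem_Tab]
  have hcol : ∀ l, (l ∈ F ∨ l = w) → (∑ j, if prj F w j0 j = l then ∑ i, m i j else 0) = ∑ i, m i l := by
    intro l hl
    rw [Finset.sum_eq_single l]
    · simp [prj, hl]
    · intro b _ hb
      rw [if_neg]
      unfold prj
      by_cases h : b ∈ F ∨ b = w
      · simpa [h] using hb
      · simp only [h, if_false]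
        rintro rfl
        rcases hl with hl | hl
        · exact hj hl
        · exact hwj hl.symm
    · simp
  have hcol0 : (∑ j, if prj F w j0 j = j0 then ∑ i, m i j else 0) + ∑ i, m i w
      = ∑ j ∈ Fᶜ, ∑ i, m i j := by
    have hw' : w ∈ Fᶜ := by simpa using hw
    rw [← Finset.sum_erase_add _ _ hw', Finset.sum_ite, Finset.sum_const_zero, add_zero]
    congr 1
    apply Finset.sum_congr _ (fun _ _ => rfl)
    ext j
    rw [Finset.mem_filter, Finset.mem_erase, Finset.mem_compl]
    unfold prj
    simp only [Finset.mem_univ, true_and]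
    by_cases h1 : j ∈ F
    · simp only [h1, true_or, if_true]
      constructor
      · rintro rfl; exact absurd h1 hj
      · rintro ⟨-, h⟩; simp at h
    · by_cases h2 : j = w
      · simp [h2, hwj]
      · simp [h1, h2]
  have hcoln : ∀ l, l ∉ F → l ≠ w → l ≠ j0 →
      (∑ j, if prj F w j0 j = l then ∑ i, m i j else 0) = 0 := by
    intro l h1 h2 h3
    refine Finset.sum_eq_zero fun j _ => ?_
    rw [if_neg]
    unfold prj
    split_ifs with h
    · rintro rfl; rcases h with h | h
      · exact h1 h
      · exact h2 h
    · exact fun h => h3 h.symm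
  constructor
  · rintro ⟨⟨-, h1⟩, h2⟩
    refine ⟨fun i => ?_, fun j hjF => ?_, ?_⟩
    · have := congrFun h2 (Sum.inl i)
      have h3 := h1 i
      simp only [subM, stv, tgt, Sum.elim_inl] at this h3
      omega
    · have := congrFun h2 (Sum.inr j)
      have n1 : j ≠ j0 := fun h => hj (h ▸ hjF)
      have n2 : j ≠ w := fun h => hw (h ▸ hjF)
      simp only [subM, stv, tgt, Sum.elim_inr, hcol j (Or.inl hjF), n1, n2, hjF, if_true, if_false] at this
      omega
    · have := congrFun h2 (Sum.inr w)
      simp only [subM, stv, tgt, Sum.elim_inr, hcol w (Or.inr rfl), hwj, hw, if_true, if_false,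
        true_or] at this
      omega
  · rintro ⟨h1, h2, h3⟩
    refine ⟨⟨fun i j h => absurd (Finset.mem_univ _) h, fun i => (h1 i).le⟩, ?_⟩
    funext x
    cases x with
    | inl i => simp [subM, stv, tgt, h1 i]
    | inr l =>
      simp only [subM, stv, tgt, Sum.elim_inr]
      by_cases l1 : l ∈ F
      · have n1 : l ≠ j0 := fun h => hj (h ▸ l1)
        have n2 : l ≠ w := fun h => hw (h ▸ l1)
        simp [hcol l (Or.inl l1), n1, n2, l1, h2 l l1]
      · by_cases l2 : l = w
        · subst l2
          simp only [hcol l (Or.inr rfl), hwj, hw, h3, if_true, if_false, true_or]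
          omega
        · by_cases l3 : l = j0
          · subst l3
            rw [tab_total al be hab F m h1 h2] at hcol0
            simp only [l1, l2, if_true, if_false, or_true]
            omega
          · rw [hcoln l l1 l2 l3]
            simp [l1, l2, l3]

lemma col_step (al : R → ℕ) (be : C → ℕ) (hab : ∑ i, al i = ∑ j, be j) (F : Finset C)
    (w j0 : C) (hw : w ∉ F) (hj : j0 ∉ F) (hwj : w ≠ j0) (c : R → C → ℝ) (hc : ∀ i j, 0 < c i j)
    (K : ℝ) (hK : ∀ t : ℝ, 0 < t → K * t ^ (be w) ≤ GF al be F (scol c w t)) :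
    K ≤ GF al be (insert w F) c * Real.exp (entH (be w)) := by
  set T := ∑ j ∈ Fᶜ, be j with hT
  have hkT : be w ≤ T := Finset.single_le_sum (f := be) (fun _ _ => Nat.zero_le _) (by simpa using hw)
  let g : R ⊕ C → ℕ := tgt be F w j0
  let bl : ℝ → ℕ → ℝ := fun lam a => PE (gauss lam g) (prj F w j0) c univ (stv al w j0 a (T - a))
  have hba : ∀ a ≤ T, ba al be F c w a = ∑ m ∈ SE univ (stv al w j0 a (T - a)),
      wt c m * (if subM (prj F w j0) (stv al w j0 a (T - a)) m = g then 1 else 0) := by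
    intro a ha
    simp only [mul_ite, mul_one, mul_zero]
    rw [← Finset.sum_filter]
    unfold ba
    apply Finset.sum_congr _ (fun _ _ => rfl)
    ext m
    rw [← sub_eq_tgt al be hab F w j0 hw hj hwj a ha m, Finset.mem_filter]
  have hle : ∀ lam, ∀ a ≤ T, ba al be F c w a ≤ bl lam a := by
    intro lam a ha
    rw [hba a ha]
    exact Finset.sum_le_sum fun m _ =>
      mul_le_mul_of_nonneg_left (gauss_ge lam _ _) (wt_pos c hc m).le
  have hlim : Filter.Tendsto (fun lam => bl lam (be w)) Filter.atTop (nhds (ba al be F c w (be w))) := by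
    rw [hba _ hkT]
    exact tendsto_finsetSum _ fun m _ => (gauss_lim _ _).const_mul _
  have hG : GF al be (insert w F) c = ba al be F c w (be w) := by
    unfold GF ba
    apply Finset.sum_congr _ (fun _ _ => rfl)
    apply Finset.filter_congr
    intro m _
    rw [Finset.forall_mem_insert, and_comm]
  rw [hG]
  have hfin : ∀ lam, 0 < lam → K ≤ bl lam (be w) * Real.exp (entH (be w)) := by
    intro lam hlam
    have gp : ∀ x, 0 < gauss lam g x := fun x => Real.exp_pos _
    refine oneD_poly (bl lam) T (be w) hkT (fun a _ => PE_pos _ gp _ c hc _ _) ?_ K ?_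
    · intro a ha
      have L := (PE_lor _ gp (gauss_lor lam hlam g) (prj F w j0) c hc univ).logconcave
        (PE_pos _ gp _ c hc _) (stv al w j0 a (T - (a + 2))) (Sum.inr w) (Sum.inr j0)
      have e1 : stv al w j0 a (T - (a + 2)) + ev (Sum.inr w) + ev (Sum.inr w)
          = stv al w j0 a (T - a) := by
        funext x
        cases x with
        | inl i => simp [stv, ev]
        | inr l =>
          by_cases l2 : l = w
          · subst l2; simp [stv, ev, hwj]; omega
          · simp [stv, ev, l2]
      have e2 : stv al w j0 a (T - (a + 2)) + ev (Sum.inr j0) + ev (Sum.inr j0)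
          = stv al w j0 (a + 2) (T - (a + 2)) := by
        funext x
        cases x with
        | inl i => simp [stv, ev]
        | inr l =>
          by_cases l2 : l = j0
          · subst l2; simp [stv, ev]
          · simp [stv, ev, l2]
      have e3 : stv al w j0 a (T - (a + 2)) + ev (Sum.inr w) + ev (Sum.inr j0)
          = stv al w j0 (a + 1) (T - (a + 1)) := by
        funext x
        cases x with
        | inl i => simp [stv, ev]
        | inr l =>
          by_cases l2 : l = j0
          · subst l2; simp [stv, ev, hwj.symm]
          · by_cases l3 : l = w
            · subst l3; simp [stv, ev, l2]; omega
            · simp [stv, ev, l2, l3]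
      rw [e1, e2, e3] at L
      exact L
    · intro t ht
      refine (hK t ht).trans ?_
      rw [GF_scol al be hab F c w hw t]
      refine Finset.sum_le_sum fun a ha => ?_
      have := hle lam a (by simpa [Nat.lt_succ_iff] using ha)
      gcongr
  refine ge_of_tendsto (hlim.mul_const _) ?_
  filter_upwards [Filter.eventually_gt_atTop 0] with lam hlam using hfin lam hlam

/-- Main generic lower bound. -/
theorem generic_bound (al : R → ℕ) (be : C → ℕ) (hab : ∑ i, al i = ∑ j, be j) (j0 : C)
    (M : R → C → ℝ) (hM : ∀ i j, 0 ≤ M i j) (hr : ∀ i, ∑ j, M i j = al i)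
    (hcs : ∀ j, ∑ i, M i j = be j) (F : Finset C) (hF : j0 ∉ F) :
    ∀ (c : R → C → ℝ), (∀ i j, 0 < c i j) →
    (∏ i, ∏ j, c i j ^ (M i j) * Real.exp (entH (M i j))) ≤
      GF al be F c * ((∏ i, Real.exp (entH (al i))) * ∏ j ∈ F, Real.exp (entH (be j))) := by
  have : Nonempty C := ⟨j0⟩
  induction F using Finset.induction_on with
  | empty =>
    intro c hc
    have e : GF al be ∅ c = ∏ i, ∑ f ∈ piAntidiag univ (al i), ∏ j, c i j ^ f j := by
      unfold GF Tab wt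
      simp only [Finset.notMem_empty, false_imp_iff, implies_true, Finset.filter_true]
      rw [Finset.prod_univ_sum]
    rw [e, Finset.prod_empty, mul_one, ← Finset.prod_mul_distrib]
    refine Finset.prod_le_prod (fun i _ => Finset.prod_nonneg fun j _ => ?_) fun i _ =>
      row_lemma (c i) (hc i) (M i) (hM i) (al i) (hr i)
    have := hc i j
    positivity
  | insert w F hw ih =>
    intro c hc
    rw [Finset.mem_insert, not_or] at hF
    rw [Finset.prod_insert hw]
    set D := (∏ i, Real.exp (entH (al i))) * ∏ j ∈ F, Real.exp (entH (be j)) with hD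
    have hD0 : 0 < D := mul_pos (Finset.prod_pos fun _ _ => Real.exp_pos _)
      (Finset.prod_pos fun _ _ => Real.exp_pos _)
    have := col_step al be hab F w j0 hw hF.2 (Ne.symm hF.1) c hc
      ((∏ i, ∏ j, c i j ^ (M i j) * Real.exp (entH (M i j))) / D) ?_
    · rw [div_le_iff₀ hD0] at this
      refine this.trans (le_of_eq ?_)
      rw [hD]; ring
    · intro t ht
      have hs : ∀ i j, 0 < scol c w t i j := by
        intro i j; unfold scol; have := hc i j; split_ifs <;> positivity
      have h := ih hF.2 (scol c w t) hs
      rw [div_mul_eq_mul_div, div_le_iff₀ hD0]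
      refine le_trans (le_of_eq ?_) h
      rw [← Real.rpow_natCast, ← hcs w, Real.rpow_sum_of_pos ht, ← Finset.prod_mul_distrib]
      refine Finset.prod_congr rfl fun i _ => ?_
      have : ∀ j, scol c w t i j ^ M i j * Real.exp (entH (M i j))
          = c i j ^ M i j * Real.exp (entH (M i j)) * if j = w then t ^ M i w else 1 := by
        intro j
        by_cases h : j = w
        · subst h; simp only [scol, if_true]; rw [Real.mul_rpow ht.le (hc i j).le]; ring
        · simp [scol, h]
      simp only [this]
      rw [Finset.prod_mul_distrib (f := fun j => c i j ^ M i j * Real.exp (entH (M i j))), Finset.prod_ite_eq']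
      simp
end

open Finset
set_option linter.unusedSectionVars false

section
variable {R C : Type*} [Fintype R] [DecidableEq R] [Fintype C] [DecidableEq C]

lemma supported_bound (al : R → ℕ) (be : C → ℕ) (hab : ∑ i, al i = ∑ j, be j) (j0 : C)
    (M : R → C → ℝ) (hM : ∀ i j, 0 ≤ M i j) (hr : ∀ i, ∑ j, M i j = al i)
    (hcs : ∀ j, ∑ i, M i j = be j) (S : R → C → Prop) [∀ i j, Decidable (S i j)]
    (hS : ∀ i j, ¬ S i j → M i j = 0) :
    (∏ i, ∏ j, Real.exp (entH (M i j))) ≤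
      (((Tab al).filter (fun m : R → C → ℕ => (∀ j, ∑ i, m i j = be j) ∧
        ∀ i j, ¬ S i j → m i j = 0)).card : ℝ) *
      ((∏ i, Real.exp (entH (al i))) * ∏ j ∈ univ.erase j0, Real.exp (entH (be j))) := by
  let c : ℝ → R → C → ℝ := fun d i j => if S i j then 1 else d
  have h1 : ∀ d, 0 < d → (∏ i, ∏ j, Real.exp (entH (M i j))) ≤ GF al be (univ.erase j0) (c d) *
      ((∏ i, Real.exp (entH (al i))) * ∏ j ∈ univ.erase j0, Real.exp (entH (be j))) := by
    intro d hd
    have h := generic_bound al be hab j0 M hM hr hcs (univ.erase j0) (by simp) (c d)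
      (fun i j => by simp only [c]; split_ifs <;> linarith)
    refine le_trans (le_of_eq ?_) h
    refine Finset.prod_congr rfl fun i _ => Finset.prod_congr rfl fun j _ => ?_
    by_cases hs : S i j
    · simp [c, hs]
    · simp [c, hs, hS i j hs]
  have hcont : Continuous fun d => GF al be (univ.erase j0) (c d) := by
    unfold GF wt
    refine continuous_finsetSum _ fun m _ => continuous_finsetProd _ fun i _ =>
      continuous_finsetProd _ fun j _ => Continuous.pow ?_ _
    by_cases hs : S i j
    · simp only [c, hs, if_true]; exact continuous_const
    · simp only [c, hs, if_false]; exact continuous_id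
  have h2 : (∏ i, ∏ j, Real.exp (entH (M i j))) ≤ GF al be (univ.erase j0) (c 0) *
      ((∏ i, Real.exp (entH (al i))) * ∏ j ∈ univ.erase j0, Real.exp (entH (be j))) := by
    have ht := ((hcont.tendsto 0).mono_left (nhdsWithin_le_nhds (s := Set.Ioi 0))).mul_const
      ((∏ i, Real.exp (entH (al i))) * ∏ j ∈ univ.erase j0, Real.exp (entH (be j)))
    refine ge_of_tendsto ht ?_
    filter_upwards [self_mem_nhdsWithin] with d hd using h1 d hd
  refine h2.trans (le_of_eq ?_)
  congr 1
  have hw : ∀ m : R → C → ℕ, wt (c 0) m = if (∀ i j, ¬ S i j → m i j = 0) then 1 else 0 := by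
    intro m
    split_ifs with h
    · unfold wt
      refine Finset.prod_eq_one fun i _ => Finset.prod_eq_one fun j _ => ?_
      by_cases hs : S i j
      · simp [c, hs]
      · simp [c, hs, h i j hs]
    · push Not at h
      obtain ⟨i, j, hs, hm⟩ := h
      unfold wt
      refine Finset.prod_eq_zero (Finset.mem_univ i) (Finset.prod_eq_zero (Finset.mem_univ j) ?_)
      simp [c, hs, hm]
  unfold GF
  simp only [hw]
  rw [← Finset.sum_filter, Finset.sum_const, nsmul_eq_mul, mul_one, Finset.filter_filter]
  congr 2
  apply Finset.filter_congr
  intro m hm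
  rw [mem_Tab] at hm
  constructor
  · rintro ⟨ha, hb⟩
    refine ⟨fun j => ?_, hb⟩
    by_cases hj : j = j0
    · subst hj
      have := tab_total al be hab (univ.erase j) m hm ha
      have e : (univ.erase j : Finset C)ᶜ = {j} := by ext x; simp
      rw [e, Finset.sum_singleton, Finset.sum_singleton] at this
      exact this
    · exact ha j (by simp [hj])
  · rintro ⟨ha, hb⟩
    exact ⟨fun j _ => ha j, hb⟩
end

section
variable {n : ℕ}

/-- slack at a vertex -/
noncomputable def slk (N : Fin (n + 1) → ℝ) (f : Fin (n + 1) → Fin (n + 1) → ℝ) (v : Fin (n + 1)) : ℝ :=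
  ∑ l : Fin (n + 1), if l < v then (N l - f l v) else 0

lemma slk_eq (N : Fin (n + 1) → ℝ) (f : Fin (n + 1) → Fin (n + 1) → ℝ) (hf : f ∈ FlowPolytope n N)
    (v : Fin (n + 1)) : slk N f v = ∑ l, ∑ w, if l < v ∧ v < w then f l w else 0 := by
  obtain ⟨h0, h1, h2⟩ := hf
  have e1 : ∑ l, (if l < v then N l else 0) =
      (∑ l, ∑ w, if l < v ∧ l < w then f l w else 0) - ∑ l, ∑ w, if w < v ∧ l < w then f l w else 0 := by
    rw [Finset.sum_comm (f := fun l w => if w < v ∧ l < w then f l w else 0), ← Finset.sum_sub_distrib]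
    refine Finset.sum_congr rfl fun l _ => ?_
    by_cases h : l < v
    · simp only [h, if_true, true_and, ← h2 l]
    · simp [h]
  have e2 : ∑ l, (if l < v then f l v else 0) = ∑ l, ∑ w, if l < v ∧ w = v then f l w else 0 := by
    refine Finset.sum_congr rfl fun l _ => ?_
    by_cases h : l < v <;> simp [h]
  have e3 : slk N f v = ∑ l, (if l < v then N l else 0) - ∑ l, (if l < v then f l v else 0) := by
    unfold slk
    rw [← Finset.sum_sub_distrib]
    refine Finset.sum_congr rfl fun l _ => ?_
    by_cases h : l < v <;> simp [h]
  rw [e3, e1, e2, ← Finset.sum_sub_distrib, ← Finset.sum_sub_distrib]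
  refine Finset.sum_congr rfl fun l _ => ?_
  rw [← Finset.sum_sub_distrib, ← Finset.sum_sub_distrib]
  refine Finset.sum_congr rfl fun w _ => ?_
  by_cases a1 : l < v
  · rcases lt_trichotomy w v with h | h | h
    · simp [a1, h, h.ne, not_lt.mpr h.le]
    · subst h; simp [a1]
    · have : l < w := a1.trans h
      simp [a1, h, h.ne', not_lt.mpr h.le, this]
  · have : ¬ (w < v ∧ l < w) := fun h => a1 (h.2.trans h.1)
    simp [a1, this]

lemma slk_nonneg (N : Fin (n + 1) → ℝ) (f : Fin (n + 1) → Fin (n + 1) → ℝ) (hf : f ∈ FlowPolytope n N)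
    (v : Fin (n + 1)) : 0 ≤ slk N f v := by
  rw [slk_eq N f hf]
  refine Finset.sum_nonneg fun l _ => Finset.sum_nonneg fun w _ => ?_
  split_ifs with h
  · exact hf.1 l w (h.1.trans h.2)
  · exact le_rfl

lemma slk_zero (N : Fin (n + 1) → ℝ) (f : Fin (n + 1) → Fin (n + 1) → ℝ) : slk N f 0 = 0 := by
  simp [slk]

lemma slk_last (N : Fin (n + 1) → ℝ) (f : Fin (n + 1) → Fin (n + 1) → ℝ) (hf : f ∈ FlowPolytope n N) :
    slk N f (Fin.last n) = 0 := by
  rw [slk_eq N f hf]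
  refine Finset.sum_eq_zero fun l _ => Finset.sum_eq_zero fun w _ => if_neg ?_
  exact fun h => absurd h.2 (not_lt.mpr (Fin.le_last w))

lemma in_slk (N : Fin (n + 1) → ℝ) (f : Fin (n + 1) → Fin (n + 1) → ℝ) (v : Fin (n + 1)) :
    (∑ k, if k < v then f k v else 0) + slk N f v = ∑ k, if k < v then N k else 0 := by
  unfold slk
  rw [← Finset.sum_add_distrib]
  refine Finset.sum_congr rfl fun l _ => ?_
  by_cases h : l < v <;> simp [h]

lemma out_slk (N : Fin (n + 1) → ℝ) (f : Fin (n + 1) → Fin (n + 1) → ℝ) (hf : f ∈ FlowPolytope n N)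
    (v : Fin (n + 1)) :
    (∑ k, if v < k then f v k else 0) + slk N f v = ∑ k, if k ≤ v then N k else 0 := by
  have h1 := in_slk N f v
  have h2 := hf.2.2 v
  have h3 : ∑ k, (if k ≤ v then N k else 0) = ∑ k, (if k < v then N k else 0) + N v := by
    have : ∀ k, (if k ≤ v then N k else 0) = (if k < v then N k else 0) + if k = v then N v else 0 := by
      intro k
      rcases lt_trichotomy k v with h | h | h
      · simp [h, h.le, h.ne]
      · subst h; simp
      · simp [not_le.mpr h, not_lt.mpr h.le, h.ne']
    simp only [this, Finset.sum_add_distrib, Finset.sum_ite_eq', Finset.mem_univ, if_true]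
  linarith

lemma sPartial_cast (N : Fin (n + 1) → ℤ) (v : Fin (n + 1)) :
    ((sPartial n N v : ℤ) : ℝ) = ∑ k, if k ≤ v then (N k : ℝ) else 0 := by
  unfold sPartial
  rw [Int.cast_sum]
  refine Finset.sum_congr rfl fun k _ => ?_
  by_cases h : k ≤ v
  · have h' : (k : ℕ) ≤ v := h
    rw [if_pos h, if_pos h']
  · have h' : ¬ (k : ℕ) ≤ v := h
    rw [if_neg h, if_neg h', Int.cast_zero]

lemma sPartial_sub (N : Fin (n + 1) → ℤ) (v : Fin (n + 1)) :
    sPartial n N v = (∑ k, if k < v then N k else 0) + N v := by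
  unfold sPartial
  have : ∀ k : Fin (n + 1), (if (k : ℕ) ≤ v then N k else 0) = (if k < v then N k else 0) + if k = v then N v else 0 := by
    intro k
    rcases lt_trichotomy k v with h | h | h
    · have : (k : ℕ) ≤ v := h.le
      simp [h, this, h.ne]
    · subst h; simp
    · have : ¬ (k : ℕ) ≤ v := by simpa using h
      simp [this, not_lt.mpr h.le, h.ne']
  simp only [this, Finset.sum_add_distrib, Finset.sum_ite_eq', Finset.mem_univ, if_true]

/-- extended real table -/
noncomputable def Xm (N : Fin (n + 1) → ℝ) (f : Fin (n + 1) → Fin (n + 1) → ℝ) (u v : Fin (n + 1)) : ℝ :=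
  (if u < v then f u v else 0) + if u = v then slk N f u else 0

lemma Xm_zero (N : Fin (n + 1) → ℝ) (f : Fin (n + 1) → Fin (n + 1) → ℝ) (u : Fin (n + 1)) :
    Xm N f u 0 = 0 := by
  unfold Xm
  by_cases h : u = 0
  · subst h; simp [slk_zero]
  · simp [h]

lemma Xm_last (N : Fin (n + 1) → ℝ) (f : Fin (n + 1) → Fin (n + 1) → ℝ) (hf : f ∈ FlowPolytope n N)
    (v : Fin (n + 1)) : Xm N f (Fin.last n) v = 0 := by
  unfold Xm
  by_cases h : Fin.last n = v
  · subst h; simp [slk_last N f hf]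
  · simp [h, not_lt.mpr (Fin.le_last v)]

lemma Xm_row (N : Fin (n + 1) → ℝ) (f : Fin (n + 1) → Fin (n + 1) → ℝ) (hf : f ∈ FlowPolytope n N)
    (i : Fin n) : ∑ j : Fin n, Xm N f i.castSucc j.succ = ∑ k, if k ≤ i.castSucc then N k else 0 := by
  have h := Fin.sum_univ_succ (fun v => Xm N f i.castSucc v)
  rw [Xm_zero, zero_add] at h
  rw [← h, ← out_slk N f hf]
  unfold Xm
  simp [Finset.sum_add_distrib]

lemma Xm_col (N : Fin (n + 1) → ℝ) (f : Fin (n + 1) → Fin (n + 1) → ℝ) (hf : f ∈ FlowPolytope n N)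
    (j : Fin n) : ∑ i : Fin n, Xm N f i.castSucc j.succ = ∑ k, if k ≤ j.castSucc then N k else 0 := by
  have h := Fin.sum_univ_castSucc (fun v => Xm N f v j.succ)
  rw [Xm_last N f hf, add_zero] at h
  rw [← h]
  have e : ∑ k, (if k ≤ j.castSucc then N k else 0) = ∑ k, if k < j.succ then N k else 0 := by
    refine Finset.sum_congr rfl fun k _ => ?_
    simp only [Fin.le_castSucc_iff]
  rw [e, ← in_slk N f]
  unfold Xm
  simp [Finset.sum_add_distrib]

lemma Xm_ent (N : Fin (n + 1) → ℝ) (f : Fin (n + 1) → Fin (n + 1) → ℝ) (hf : f ∈ FlowPolytope n N) :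
    ∑ i : Fin n, ∑ j : Fin n, entH (Xm N f i.castSucc j.succ) = flowEntropy n N f := by
  have h1 : ∀ i, ∑ j : Fin n, entH (Xm N f i j.succ) = ∑ v, entH (Xm N f i v) := by
    intro i
    rw [Fin.sum_univ_succ, Xm_zero, entH_zero, zero_add]
  have h2 : ∑ i : Fin n, ∑ v, entH (Xm N f i.castSucc v) = ∑ u, ∑ v, entH (Xm N f u v) := by
    rw [Fin.sum_univ_castSucc]
    simp [Xm_last N f hf, entH_zero]
  simp only [h1]
  rw [h2]
  unfold flowEntropy
  have h3 : ∀ u v, entH (Xm N f u v) = (if u < v then entH (f u v) else 0)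
      + if u = v then entH (slk N f u) else 0 := by
    intro u v
    unfold Xm
    by_cases h : u = v
    · subst h; simp
    · by_cases h' : u < v <;> simp [h, h', entH_zero]
  simp only [h3, Finset.sum_add_distrib, Finset.sum_ite_eq, Finset.mem_univ, if_true]
  congr 1
  refine Finset.sum_congr rfl fun v _ => ?_
  split_ifs with h
  · rfl
  · have : v = 0 ∨ v = Fin.last n := by
      rw [Fin.ext_iff, Fin.ext_iff]
      have := v.2
      simp only [Fin.val_zero, Fin.val_last]
      omega
    rcases this with rfl | rfl
    · rw [slk_zero, entH_zero]
    · rw [slk_last N f hf, entH_zero]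

/-- extended integer table -/
def Ym (m : Fin n → Fin n → ℕ) (u v : Fin (n + 1)) : ℕ :=
  if h : u ≠ Fin.last n ∧ v ≠ 0 then m (u.castPred h.1) (v.pred h.2) else 0

lemma Ym_cs (m : Fin n → Fin n → ℕ) (i j : Fin n) : Ym m i.castSucc j.succ = m i j := by
  unfold Ym
  rw [dif_pos ⟨i.castSucc_lt_last.ne, j.succ_ne_zero⟩]
  simp

lemma Ym_zero (m : Fin n → Fin n → ℕ) (u) : Ym m u 0 = 0 := by simp [Ym]
lemma Ym_last (m : Fin n → Fin n → ℕ) (v) : Ym m (Fin.last n) v = 0 := by simp [Ym]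

lemma Ym_flow (N : Fin (n + 1) → ℤ) (hsum : ∑ i, N i = 0) (m : Fin n → Fin n → ℕ)
    (hr : ∀ i : Fin n, ((∑ j, m i j : ℕ) : ℤ) = sPartial n N i)
    (hc : ∀ j : Fin n, ((∑ i, m i j : ℕ) : ℤ) = sPartial n N j)
    (hS : ∀ i j : Fin n, ¬ i.castSucc ≤ j.succ → m i j = 0) :
    IsIntFlow n N fun u v => if u < v then Ym m u v else 0 := by
  refine ⟨fun i j h => by simp [h], fun u => ?_⟩
  have hS' : ∀ u v, ¬ u ≤ v → Ym m u v = 0 := by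
    intro u v huv
    induction u using Fin.lastCases with
    | last => exact Ym_last m v
    | cast i =>
      induction v using Fin.cases with
      | zero => exact Ym_zero m _
      | succ j => rw [Ym_cs]; exact hS i j huv
  have row : ∀ u : Fin (n + 1), ∑ v, (Ym m u v : ℤ) = sPartial n N u := by
    intro u
    induction u using Fin.lastCases with
    | last =>
      simp only [Ym_last]
      unfold sPartial
      rw [← hsum]
      have : ∀ k : Fin (n + 1), (k : ℕ) ≤ n := fun k => Nat.lt_succ_iff.mp k.2
      simp [this, hsum]
    | cast i =>
      rw [Fin.sum_univ_succ, Ym_zero]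
      simp only [Ym_cs]
      have := hr i
      push_cast at this
      simpa using this
  have col : ∀ v : Fin (n + 1), ∑ u, (Ym m u v : ℤ) = ∑ k, if k < v then N k else 0 := by
    intro v
    induction v using Fin.cases with
    | zero => simp [Ym_zero]
    | succ j =>
      rw [Fin.sum_univ_castSucc, Ym_last]
      simp only [Ym_cs]
      have := hc j
      push_cast at this
      rw [this]
      unfold sPartial
      simp only [Nat.cast_zero, add_zero]
      refine Finset.sum_congr rfl fun k _ => ?_
      have : (k : ℕ) ≤ j ↔ k < j.succ := by simp [Fin.lt_def, Nat.lt_succ_iff]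
      simp [this]
  have e1 : ∑ v, (Ym m u v : ℤ) = (∑ j, if u < j then (Ym m u j : ℤ) else 0) + Ym m u u := by
    have : ∀ v, (Ym m u v : ℤ) = (if u < v then (Ym m u v : ℤ) else 0) + if v = u then (Ym m u u : ℤ) else 0 := by
      intro v
      rcases lt_trichotomy u v with h | h | h
      · simp [h, h.ne']
      · subst h; simp
      · simp [hS' u v (not_le.mpr h), not_lt.mpr h.le, h.ne]
    rw [Finset.sum_congr rfl fun v _ => this v, Finset.sum_add_distrib]
    simp
  have e2 : ∑ v, (Ym m v u : ℤ) = (∑ j, if j < u then (Ym m j u : ℤ) else 0) + Ym m u u := by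
    have : ∀ v, (Ym m v u : ℤ) = (if v < u then (Ym m v u : ℤ) else 0) + if v = u then (Ym m u u : ℤ) else 0 := by
      intro v
      rcases lt_trichotomy v u with h | h | h
      · simp [h, h.ne]
      · subst h; simp
      · simp [hS' v u (not_le.mpr h), not_lt.mpr h.le, h.ne']
    rw [Finset.sum_congr rfl fun v _ => this v, Finset.sum_add_distrib]
    simp
  have r := row u
  have c := col u
  have s := sPartial_sub N u
  have g1 : (∑ j, if u < j then ((if u < j then Ym m u j else 0 : ℕ) : ℤ) else 0)
      = ∑ j, if u < j then (Ym m u j : ℤ) else 0 := by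
    refine Finset.sum_congr rfl fun j _ => ?_
    by_cases h : u < j <;> simp [h]
  have g2 : (∑ j, if j < u then ((if j < u then Ym m j u else 0 : ℕ) : ℤ) else 0)
      = ∑ j, if j < u then (Ym m j u : ℤ) else 0 := by
    refine Finset.sum_congr rfl fun j _ => ?_
    by_cases h : j < u <;> simp [h]
  show (∑ j, if u < j then ((if u < j then Ym m u j else 0 : ℕ) : ℤ) else 0)
    - (∑ j, if j < u then ((if j < u then Ym m j u else 0 : ℕ) : ℤ) else 0) = N u
  rw [g1, g2]
  linarith

lemma Ym_inj (m m' : Fin n → Fin n → ℕ) (hc : ∀ j : Fin n, ∑ i, m i j = ∑ i, m' i j)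
    (hS : ∀ i j : Fin n, ¬ i.castSucc ≤ j.succ → m i j = 0)
    (hS' : ∀ i j : Fin n, ¬ i.castSucc ≤ j.succ → m' i j = 0)
    (h : (fun u v : Fin (n + 1) => if u < v then Ym m u v else 0) =
      fun u v => if u < v then Ym m' u v else 0) : m = m' := by
  have h1 : ∀ i j : Fin n, i.castSucc ≠ j.succ → m i j = m' i j := by
    intro i j hne
    rcases lt_or_gt_of_ne hne with hlt | hgt
    · have := congrFun (congrFun h i.castSucc) j.succ
      simpa only [hlt, if_true, Ym_cs] using this
    · rw [hS i j (not_le.mpr hgt), hS' i j (not_le.mpr hgt)]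
  funext i j
  by_cases hij : i.castSucc = j.succ
  · have := hc j
    rw [← Finset.add_sum_erase _ _ (Finset.mem_univ i),
      ← Finset.add_sum_erase _ (fun i => m' i j) (Finset.mem_univ i)] at this
    have e : ∑ x ∈ univ.erase i, m x j = ∑ x ∈ univ.erase i, m' x j := by
      refine Finset.sum_congr rfl fun x hx => h1 x j fun hx' => ?_
      rw [← hij] at hx'
      exact (Finset.mem_erase.mp hx).1 (Fin.castSucc_injective n hx')
    simp only [e] at this
    exact Nat.add_right_cancel this
  · exact h1 i j hij

lemma intFlow_finite (N : Fin (n + 1) → ℤ) : {g | IsIntFlow n N g}.Finite := by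
  refine (Set.finite_Icc (0 : Fin (n + 1) → Fin (n + 1) → ℕ)
    (fun u _ => (sPartial n N u).toNat)).subset ?_
  intro g hg
  refine ⟨fun _ _ => Nat.zero_le _, fun u v => ?_⟩
  have hf : (fun i j => (g i j : ℝ)) ∈ FlowPolytope n (fun i => (N i : ℝ)) := by
    refine ⟨fun i j _ => Nat.cast_nonneg _, fun i j h => by simp [hg.1 i j h], fun i => ?_⟩
    have := hg.2 i
    have h2 := congrArg (fun z : ℤ => (z : ℝ)) this
    push_cast at h2
    exact h2
  have h1 := out_slk _ _ hf u
  have h2 := slk_nonneg _ _ hf u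
  rw [← sPartial_cast N u] at h1
  have h3 : (g u v : ℝ) ≤ ∑ k, if u < k then (g u k : ℝ) else 0 := by
    by_cases h : u < v
    · have := Finset.single_le_sum (f := fun k => if u < k then (g u k : ℝ) else 0)
        (fun k _ => by split_ifs <;> positivity) (Finset.mem_univ v)
      simpa [h] using this
    · rw [hg.1 u v h, Nat.cast_zero]
      exact Finset.sum_nonneg fun k _ => by split_ifs <;> positivity
  have h4 : ((g u v : ℤ) : ℝ) ≤ (sPartial n N u : ℤ) := by push_cast; linarith
  have h5 : (g u v : ℤ) ≤ sPartial n N u := by exact_mod_cast h4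
  show g u v ≤ (sPartial n N u).toNat
  omega
end

/-- **Theorem.** For any point `f` of the flow polytope `F_n(N)`,
`K_n(N) ≥ (max_{0 ≤ k ≤ n−1} e^{h(s_k)}) · e^{−2 ∑_k h(s_k)} · e^{H(f)}`. -/
theorem kostant_lower_bound_of_flow (n : ℕ) (hn : 1 ≤ n) (N : Fin (n + 1) → ℤ)
    (hsum : ∑ i, N i = 0)
    (f : Fin (n + 1) → Fin (n + 1) → ℝ)
    (hf : f ∈ FlowPolytope n fun i => (N i : ℝ)) :
    (Kn n N : ℝ) ≥
      (⨆ k : Fin n, Real.exp (entH ((sPartial n N k : ℤ) : ℝ))) *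
        Real.exp (-2 * ∑ k ∈ Finset.range n, entH ((sPartial n N k : ℤ) : ℝ)) *
        Real.exp (flowEntropy n (fun i => (N i : ℝ)) f) := by
  have : Nonempty (Fin n) := ⟨⟨0, hn⟩⟩
  obtain ⟨j0, hj0⟩ := exists_eq_ciSup_of_finite
    (f := fun k : Fin n => Real.exp (entH ((sPartial n N k : ℤ) : ℝ)))
  set Nr : Fin (n + 1) → ℝ := fun i => (N i : ℝ) with hNr
  set M : Fin n → Fin n → ℝ := fun i j => Xm Nr f i.castSucc j.succ with hMdef
  have hM : ∀ i j, 0 ≤ M i j := by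
    intro i j
    simp only [hMdef, Xm]
    refine add_nonneg ?_ ?_
    · split_ifs with h
      · exact hf.1 _ _ h
      · exact le_rfl
    · split_ifs with h
      · exact slk_nonneg _ _ hf _
      · exact le_rfl
  have hrow : ∀ i, ∑ j, M i j = ((sPartial n N i : ℤ) : ℝ) := by
    intro i
    have := sPartial_cast N i.castSucc
    rw [Fin.val_castSucc] at this
    rw [this]; exact Xm_row Nr f hf i
  have hcol : ∀ j, ∑ i, M i j = ((sPartial n N j : ℤ) : ℝ) := by
    intro j
    have := sPartial_cast N j.castSucc
    rw [Fin.val_castSucc] at this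
    rw [this]; exact Xm_col Nr f hf j
  have hs0 : ∀ i : Fin n, 0 ≤ sPartial n N i := by
    intro i
    have : (0:ℝ) ≤ ((sPartial n N i : ℤ) : ℝ) := by
      rw [← hrow i]; exact Finset.sum_nonneg fun j _ => hM i j
    exact_mod_cast this
  set al : Fin n → ℕ := fun i => (sPartial n N i).toNat with hal
  have halZ : ∀ i, ((al i : ℕ) : ℤ) = sPartial n N i := fun i => Int.toNat_of_nonneg (hs0 i)
  have halR : ∀ i, ((al i : ℕ) : ℝ) = ((sPartial n N i : ℤ) : ℝ) := by
    intro i; rw [← halZ i]; simp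
  have hb := supported_bound al al rfl j0 M hM (fun i => by rw [hrow, halR])
    (fun j => by rw [hcol, halR]) (fun i j => i.castSucc ≤ j.succ) (by
      intro i j h
      have h1 : ¬ i.castSucc < j.succ := fun h' => h h'.le
      have h2 : ¬ i.castSucc = j.succ := fun h' => h h'.le
      simp only [hMdef, Xm, h1, h2, if_false, add_zero])
  set TS := (Tab al).filter (fun m : Fin n → Fin n → ℕ => (∀ j, ∑ i, m i j = al j) ∧
        ∀ i j, ¬ i.castSucc ≤ j.succ → m i j = 0) with hTS
  have hTSm : ∀ m ∈ TS, (∀ i, ∑ j, m i j = al i) ∧ (∀ j, ∑ i, m i j = al j) ∧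
      ∀ i j : Fin n, ¬ i.castSucc ≤ j.succ → m i j = 0 := by
    intro m hm
    rw [hTS, Finset.mem_filter, mem_Tab] at hm
    exact ⟨hm.1, hm.2.1, hm.2.2⟩
  have hcard : TS.card ≤ Kn n N := by
    have : Finite {g : Fin (n + 1) → Fin (n + 1) → ℕ // IsIntFlow n N g} :=
      (intFlow_finite N).to_subtype
    unfold Kn
    rw [← Nat.card_eq_fintype_card.trans (Fintype.card_coe TS)]
    refine Nat.card_le_card_of_injective
      (fun m : TS => (⟨fun u v => if u < v then Ym m.1 u v else 0, ?_⟩ :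
        {g : Fin (n + 1) → Fin (n + 1) → ℕ // IsIntFlow n N g})) ?_
    · obtain ⟨h1, h2, h3⟩ := hTSm m.1 m.2
      exact Ym_flow N hsum m.1 (fun i => by rw [h1, halZ]) (fun j => by rw [h2, halZ]) h3
    · intro m m' hmm
      obtain ⟨h1, h2, h3⟩ := hTSm m.1 m.2
      obtain ⟨h1', h2', h3'⟩ := hTSm m'.1 m'.2
      exact Subtype.ext (Ym_inj m.1 m'.1 (fun j => by rw [h2, h2']) h3 h3'
        (congrArg Subtype.val hmm))
  rw [ge_iff_le, ← hj0]
  have hE : (∏ i, ∏ j, Real.exp (entH (M i j))) = Real.exp (flowEntropy n Nr f) := by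
    rw [← Xm_ent Nr f hf, Real.exp_sum]
    exact Finset.prod_congr rfl fun i _ => (Real.exp_sum _ _).symm
  have hsr : ∑ k ∈ Finset.range n, entH ((sPartial n N k : ℤ) : ℝ)
      = ∑ k : Fin n, entH ((sPartial n N k : ℤ) : ℝ) :=
    Finset.sum_range (fun k => entH ((sPartial n N k : ℤ) : ℝ))
  simp only [halR] at hb
  rw [hE, ← Real.exp_sum, ← Real.exp_sum, ← Real.exp_add] at hb
  have hsplit := Finset.add_sum_erase univ (fun k : Fin n => entH ((sPartial n N k : ℤ) : ℝ))
    (Finset.mem_univ j0)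
  rw [hsr, ← Real.exp_add, ← Finset.add_sum_erase univ (fun k : Fin n => entH ((sPartial n N k : ℤ) : ℝ))
    (Finset.mem_univ j0)]
  rw [← hsplit] at hb
  set A := entH ((sPartial n N j0 : ℤ) : ℝ)
  set B := ∑ x ∈ univ.erase j0, entH ((sPartial n N x : ℤ) : ℝ)
  have hc' : (TS.card : ℝ) ≤ Kn n N := by exact_mod_cast hcard
  calc Real.exp (A + -2 * (A + B)) * Real.exp (flowEntropy n Nr f)
      ≤ Real.exp (A + -2 * (A + B)) * (TS.card * Real.exp (A + B + B)) := by
        rw [hTS]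
        refine mul_le_mul_of_nonneg_left ?_ (Real.exp_nonneg _)
        refine hb.trans_eq ?_
        congr!
    _ = TS.card * (Real.exp (A + -2 * (A + B)) * Real.exp (A + B + B)) := by ring
    _ = TS.card := by
        rw [← Real.exp_add, show A + -2 * (A + B) + (A + B + B) = 0 by ring, Real.exp_zero, mul_one]
    _ ≤ Kn n N := hc'
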